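/- There is a constant c > 0 such that for every n ≥ 2, every face-convex good drawing of K_n in the sphere has at least n² − c·n·log n empty triangles. -/

import Mathlib

open Set Topology

noncomputable section

abbrev Plane : Type := EuclideanSpace ℝ (Fin 2)

abbrev SpherePt : Type := ↥(Metric.sphere (0 : EuclideanSpace ℝ (Fin 3)) 1)

/-- `γ` crosses the curve `σ` at `p`: `p` lies on both sets, and in every neighbourhood of `p`
there is a smaller neighbourhood `V` such that `V \ σ` splits into two connected "sides",
both of which meet `γ`. -/
def CrossesAt {X : Type*} [TopologicalSpace X] (σ γ : Set X) (p : X) : Prop :=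
  p ∈ σ ∧ p ∈ γ ∧ ∀ U ∈ nhds p, ∃ V ∈ nhds p, V ⊆ U ∧
    ∃ C₁ C₂ : Set X, V \ σ = C₁ ∪ C₂ ∧ Disjoint C₁ C₂ ∧
      IsPreconnected C₁ ∧ IsPreconnected C₂ ∧ (γ ∩ C₁).Nonempty ∧ (γ ∩ C₂).Nonempty

/-- `Δ` is one of the closed regions ("closed discs") bounded by the curve `C`:
it is the union of `C` with a connected component of the complement of `C`. -/
def IsClosedSide {X : Type*} [TopologicalSpace X] (C Δ : Set X) : Prop :=
  ∃ q, q ∉ C ∧ Δ = connectedComponentIn Cᶜ q ∪ C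

/-- `Δ` is one of the open regions ("open discs") bounded by the curve `C`. -/
def IsOpenSide {X : Type*} [TopologicalSpace X] (C Δ : Set X) : Prop :=
  ∃ q, q ∉ C ∧ Δ = connectedComponentIn Cᶜ q

/-- `G` is a face (a connected component of the complement) of the point set `A`. -/
def IsFaceOf {X : Type*} [TopologicalSpace X] (A G : Set X) : Prop :=
  ∃ q, q ∉ A ∧ G = connectedComponentIn Aᶜ q

/-- A good drawing of the complete graph `K_n` in the space `X`. -/
structure GoodDrawing (n : ℕ) (X : Type*) [TopologicalSpace X] where
  vtx : Fin n → X
  arc : Fin n → Fin n → Set X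
  vtx_inj : Function.Injective vtx
  arc_symm : ∀ u v, arc u v = arc v u
  isArc : ∀ u v, u ≠ v → ∃ f : ℝ → X, ContinuousOn f (Set.Icc 0 1) ∧
    Set.InjOn f (Set.Icc 0 1) ∧ f 0 = vtx u ∧ f 1 = vtx v ∧ arc u v = f '' Set.Icc 0 1
  vtx_not_mem : ∀ u v w, u ≠ v → w ≠ u → w ≠ v → vtx w ∉ arc u v
  adj_arcs : ∀ u v w, u ≠ v → u ≠ w → v ≠ w → arc u v ∩ arc u w = {vtx u}
  indep_arcs : ∀ u v x y : Fin n, u ≠ v → x ≠ y → u ≠ x → u ≠ y → v ≠ x → v ≠ y →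
    (arc u v ∩ arc x y).Subsingleton ∧
      ∀ p ∈ arc u v ∩ arc x y,
        CrossesAt (arc u v) (arc x y) p ∧ CrossesAt (arc x y) (arc u v) p
  no_triple_pt : ∀ p : X, p ∉ Set.range vtx → ∀ u v x y s t : Fin n,
    u ≠ v → x ≠ y → s ≠ t →
    ({u, v} : Finset (Fin n)) ≠ {x, y} → ({u, v} : Finset (Fin n)) ≠ {s, t} →
    ({x, y} : Finset (Fin n)) ≠ {s, t} →
    ¬(p ∈ arc u v ∧ p ∈ arc x y ∧ p ∈ arc s t)

namespace GoodDrawing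

variable {n : ℕ} {X : Type*} [TopologicalSpace X]

/-- The point set of the subdrawing induced by the set `W` of vertices. -/
def image (D : GoodDrawing n X) (W : Set (Fin n)) : Set X :=
  (D.vtx '' W) ∪ ⋃ u ∈ W, ⋃ v ∈ W, ⋃ (_ : u ≠ v), D.arc u v

/-- The simple closed curve that is the drawing of the 3-cycle on `a`, `b`, `c`. -/
def tri (D : GoodDrawing n X) (a b c : Fin n) : Set X :=
  D.arc a b ∪ D.arc b c ∪ D.arc a c

/-- `Δ` is convex: it contains the arc between any two vertex points it contains. -/
def ConvexDisc (D : GoodDrawing n X) (Δ : Set X) : Prop :=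
  ∀ x y : Fin n, x ≠ y → D.vtx x ∈ Δ → D.vtx y ∈ Δ → D.arc x y ⊆ Δ

/-- `F` is a face of the drawing `D`. -/
def IsFace (D : GoodDrawing n X) (F : Set X) : Prop :=
  IsFaceOf (D.image Set.univ) F

/-- `D` is face-convex with outer face `F`. -/
def FaceConvex (D : GoodDrawing n X) (F : Set X) : Prop :=
  D.IsFace F ∧ ∀ a b c : Fin n, a ≠ b → a ≠ c → b ≠ c →
    ∀ Δ : Set X, IsClosedSide (D.tri a b c) Δ → ¬F ⊆ Δ → D.ConvexDisc Δ

/-- `D` is a convex drawing: every 3-cycle has at least one convex closed side. -/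
def IsConvex (D : GoodDrawing n X) : Prop :=
  ∀ a b c : Fin n, a ≠ b → a ≠ c → b ≠ c →
    ∃ Δ : Set X, IsClosedSide (D.tri a b c) Δ ∧ D.ConvexDisc Δ

/-- The closed curve drawn by the cycle `c 0, c 1, …, c (m-1), c 0` of `K_n`. -/
def cycCurve (D : GoodDrawing n X) {m : ℕ} [NeZero m] (c : Fin m → Fin n) : Set X :=
  ⋃ i : Fin m, D.arc (c i) (c (i + 1))

/-- `Δ` is the convex hull `Δ_W` of the vertex set `W` (relative to the outer face `F`):
the face of the subdrawing `D[W]` containing `F` is bounded by a cycle `C_W` on vertices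
of `W`, and `Δ` is the closed disc bounded by `D[C_W]` disjoint from `F`. -/
def IsHull (D : GoodDrawing n X) (F : Set X) (W : Set (Fin n)) (Δ : Set X) : Prop :=
  ∃ (m : ℕ) (c : Fin (m + 3) → Fin n), Function.Injective c ∧ (∀ i, c i ∈ W) ∧
    (∃ G : Set X, IsFaceOf (D.image W) G ∧ F ⊆ G ∧ frontier G = D.cycCurve c) ∧
    IsClosedSide (D.cycCurve c) Δ ∧ Disjoint F Δ

/-- The data of the two local sides `C 0`, `C 1` of the arc `D[uv]` at an interior
point `p` of the arc. -/
def LocalSides (D : GoodDrawing n X) (u v : Fin n) (p : X) (C : Fin 2 → Set X) : Prop :=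
  p ∈ D.arc u v ∧ p ≠ D.vtx u ∧ p ≠ D.vtx v ∧
    ∃ V ∈ nhds p, C 0 ∪ C 1 = V \ D.arc u v ∧ Disjoint (C 0) (C 1) ∧
      IsPreconnected (C 0) ∧ IsPreconnected (C 1) ∧ (C 0).Nonempty ∧ (C 1).Nonempty

/-- Relative to the outer face `F` and the local sides `C` of `D[uv]` at `p`, the
vertex `w` is on side `i` of `uv`: the closed disc bounded by `D[{u,v,w}]` not
containing `F` lies locally on side `i` of `D[uv]`. -/
def OnSide (D : GoodDrawing n X) (F : Set X) (u v : Fin n) (p : X) (C : Fin 2 → Set X)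
    (i : Fin 2) (w : Fin n) : Prop :=
  w ≠ u ∧ w ≠ v ∧ ∃ Δ : Set X, IsClosedSide (D.tri u v w) Δ ∧ ¬F ⊆ Δ ∧
    ∃ V ∈ nhds p, C i ∩ V ⊆ Δ

/-- `Side(uv, i)`: the set consisting of `u`, `v` and all vertices on side `i` of `uv`. -/
def SideSet (D : GoodDrawing n X) (F : Set X) (u v : Fin n) (p : X) (C : Fin 2 → Set X)
    (i : Fin 2) : Set (Fin n) :=
  {u, v} ∪ {w : Fin n | D.OnSide F u v p C i w}

/-- The edge-arcs `D[uv]` and `D[xy]` cross: they share a non-vertex point. -/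
def Crosses (D : GoodDrawing n X) (u v x y : Fin n) : Prop :=
  ∃ p : X, p ∈ D.arc u v ∩ D.arc x y ∧ p ∉ Set.range D.vtx

/-- The set of empty triangles of `D`: pairs of a 3-set of vertices together with an
open disc bounded by the corresponding triangle containing no vertex point. -/
def emptyTriangles (D : GoodDrawing n X) : Set (Finset (Fin n) × Set X) :=
  {T | ∃ a b c : Fin n, a ≠ b ∧ a ≠ c ∧ b ≠ c ∧ T.1 = {a, b, c} ∧
    IsOpenSide (D.tri a b c) T.2 ∧ ∀ i, D.vtx i ∉ T.2}

end GoodDrawing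

/-- A pseudoline in the plane. -/
def IsPseudoline (σ : Set Plane) : Prop :=
  IsClosed σ ∧ Nonempty (↥σ ≃ₜ ℝ) ∧ ¬IsPreconnected σᶜ

/-- An arrangement of pseudolines: any two distinct members meet in exactly one
point, at which they cross. -/
def IsArrangement (A : Finset (Set Plane)) : Prop :=
  (∀ σ ∈ A, IsPseudoline σ) ∧
    ∀ σ ∈ A, ∀ τ ∈ A, σ ≠ τ →
      ∃ p : Plane, σ ∩ τ = {p} ∧ CrossesAt σ τ p ∧ CrossesAt τ σ p

/-- A planar good drawing of `K_n` is pseudolinear if some arrangement of pseudolines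
contains, for each edge, a distinct pseudoline containing that edge-arc. -/
def GoodDrawing.Pseudolinear {n : ℕ} (D : GoodDrawing n Plane) : Prop :=
  ∃ (A : Finset (Set Plane)) (L : Fin n → Fin n → Set Plane), IsArrangement A ∧
    (∀ u v, u ≠ v → L u v ∈ A ∧ D.arc u v ⊆ L u v) ∧
    (∀ u v, L u v = L v u) ∧
    ∀ u v x y : Fin n, u ≠ v → x ≠ y →
      ({u, v} : Finset (Fin n)) ≠ {x, y} → L u v ≠ L x y

/-!
Puncture the sphere at a point of the outer face. Winding numbers then orient every triangle of the
drawing, and convexity of the inner sides makes these orientations a CC system in the sense of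
Knuth, whose empty triangles bound empty discs of the drawing.

A CC system has an extreme point; order the other points by angle around it. If `q` does not
immediately follow `p`, the points between them that come first, in angle around `p` and around `q`,
on either side of the line `pq` form empty triangles with `p` and `q`. These are at least two,
unless all points between `p` and `q` lie on one side and a single apex is closest to the line as
seen from both ends. When two such exceptional pairs share an endpoint, the apex of the wider one is
not inside the narrower one; a dyadic argument therefore bounds their number by `O(n log n)`, and
every other pair contributes two empty triangles.
-/

/-! ### Continuous logarithms -/

section Logarithms

variable {X : Type*} [TopologicalSpace X]

theorem eq_of_exp_eq_one_of_isPreconnected {s : Set X} (hs : IsPreconnected s) {g : X → ℂ}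
    (hg : ContinuousOn g s) (hexp : ∀ x ∈ s, Complex.exp (g x) = 1) {x y : X} (hx : x ∈ s)
    (hy : y ∈ s) : g x = g y := by
  have : DiscreteTopology (AddSubgroup.zmultiples (2 * Real.pi * Complex.I)) :=
    NormedSpace.discreteTopology_zmultiples _
  refine hs.constant_of_mapsTo (T := (AddSubgroup.zmultiples (2 * Real.pi * Complex.I) : Set ℂ))
    ⟨this⟩ hg (fun z hz => ?_) hx hy
  obtain ⟨k, hk⟩ := Complex.exp_eq_one_iff.1 (hexp z hz)
  exact AddSubgroup.mem_zmultiples_iff.2 ⟨k, by rw [hk, zsmul_eq_mul]⟩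

theorem eq_zero_of_exp_eq_zpow_on_sphere {a : ℂ} {r : ℝ} (hr : 0 < r) {m : ℤ} {l : ℂ → ℂ}
    (hl : ContinuousOn l (Metric.sphere a r))
    (hexp : ∀ z ∈ Metric.sphere a r, Complex.exp (l z) = (z - a) ^ m) : m = 0 := by
  have hr' : (r : ℂ) ≠ 0 := by exact_mod_cast hr.ne'
  set circle : ℝ → ℂ := fun t => a + r * Complex.exp (t * Complex.I) with hcircle
  have mem_sphere : ∀ t, circle t ∈ Metric.sphere a r := fun t => by
    simp [hcircle, Complex.norm_exp_ofReal_mul_I, abs_of_pos hr]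
  have continuous_l : Continuous fun t => l (circle t) :=
    hl.comp_continuous (by fun_prop) mem_sphere
  have key : l (circle 0) - m * (Complex.log r + (0 : ℝ) * Complex.I) =
      l (circle (2 * Real.pi)) - m * (Complex.log r + (2 * Real.pi : ℝ) * Complex.I) := by
    refine eq_of_exp_eq_one_of_isPreconnected isPreconnected_univ
      (g := fun t : ℝ => l (circle t) - m * (Complex.log r + t * Complex.I))
      (continuous_l.sub (by fun_prop)).continuousOn (fun t _ => ?_) (mem_univ _) (mem_univ _)
    rw [Complex.exp_sub, hexp _ (mem_sphere t), Complex.exp_int_mul, Complex.exp_add,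
      Complex.exp_log hr']
    simp only [hcircle, add_sub_cancel_left]
    exact div_self (zpow_ne_zero _ (mul_ne_zero hr' (Complex.exp_ne_zero _)))
  have periodic : circle 0 = circle (2 * Real.pi) := by simp [hcircle]
  have : (m : ℂ) * (2 * Real.pi * Complex.I) = 0 := by
    rw [periodic] at key
    push_cast at key
    linear_combination key
  exact_mod_cast (mul_eq_zero.1 this).resolve_right Complex.two_pi_I_ne_zero

theorem continuousOn_piecewise_union {Y : Type*} [TopologicalSpace Y] {K₁ K₂ : Set X}
    [DecidablePred (· ∈ K₁)] (hK₁ : IsClosed K₁) (hK₂ : IsClosed K₂) {g₁ g₂ : X → Y}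
    (hg₁ : ContinuousOn g₁ K₁) (hg₂ : ContinuousOn g₂ K₂) (heq : EqOn g₁ g₂ (K₁ ∩ K₂)) :
    ContinuousOn (K₁.piecewise g₁ g₂) (K₁ ∪ K₂) := by
  refine (hg₁.congr (piecewise_eqOn _ _ _)).union_of_isClosed (hg₂.congr fun x hx => ?_) hK₁ hK₂
  by_cases hx₁ : x ∈ K₁
  · rw [piecewise_eq_of_mem _ _ _ hx₁, heq ⟨hx₁, hx⟩]
  · rw [piecewise_eq_of_notMem _ _ _ hx₁]

/-- A set on which every nonvanishing continuous complex function has a continuous logarithm;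
for compact subsets of the plane these are the sets that do not separate it. -/
def IsLogTrivial (K : Set X) : Prop :=
  ∀ f : X → ℂ, ContinuousOn f K → (∀ x ∈ K, f x ≠ 0) →
    ∃ g : X → ℂ, ContinuousOn g K ∧ ∀ x ∈ K, Complex.exp (g x) = f x

theorem isLogTrivial_univ [SimplyConnectedSpace X] [LocallyPathConnectedSpace X] :
    IsLogTrivial (univ : Set X) := by
  intro f hf hf0
  obtain ⟨x₀⟩ : Nonempty X := inferInstance
  obtain ⟨l, ⟨-, hl⟩, -⟩ := Complex.isCoveringMapOn_exp.existsUnique_continuousMap_lifts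
    ⟨f, continuousOn_univ.1 hf⟩ (a₀ := x₀) (Complex.exp_log (hf0 x₀ (mem_univ _)))
    (fun x => hf0 x (mem_univ _))
  exact ⟨l, l.continuous.continuousOn, fun x _ => congrFun hl x⟩

namespace IsLogTrivial

theorem image_Icc [T2Space X] [NormalSpace X] {f : ℝ → X} {s t : ℝ} (hst : s ≤ t)
    (hf : ContinuousOn f (Icc s t)) (hinj : InjOn f (Icc s t)) :
    IsLogTrivial (f '' Icc s t) := by
  intro h hh hh0
  have mem_arc : ∀ z, f (projIcc s t hst z) ∈ f '' Icc s t := fun z =>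
    mem_image_of_mem f (projIcc s t hst z).2
  have continuous_param : Continuous fun z => f (projIcc s t hst z) :=
    hf.comp_continuous (by fun_prop) fun z => (projIcc s t hst z).2
  obtain ⟨l, hl, hexp⟩ := isLogTrivial_univ (fun z : ℝ => h (f (projIcc s t hst z)))
    (hh.comp_continuous continuous_param mem_arc).continuousOn (fun z _ => hh0 _ (mem_arc z))
  have embedding : IsClosedEmbedding fun x : Icc s t => f x :=
    (continuousOn_iff_continuous_domRestrict.1 hf).isClosedEmbedding
      fun x y hxy => Subtype.ext (hinj x.2 y.2 hxy)
  obtain ⟨g, hg⟩ := ContinuousMap.exists_extension' embedding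
    ⟨fun x : Icc s t => l x, (continuousOn_univ.1 hl).comp continuous_subtype_val⟩
  refine ⟨g, g.continuous.continuousOn, ?_⟩
  rintro _ ⟨τ, hτ, rfl⟩
  have hgτ : g (f τ) = l τ := congrFun hg ⟨τ, hτ⟩
  rw [hgτ, hexp τ (mem_univ _), projIcc_of_mem hst hτ]

protected theorem union {K₁ K₂ : Set X} (hK₁ : IsClosed K₁) (hK₂ : IsClosed K₂)
    (h₁ : IsLogTrivial K₁) (h₂ : IsLogTrivial K₂) (hconn : IsPreconnected (K₁ ∩ K₂)) :
    IsLogTrivial (K₁ ∪ K₂) := by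
  classical
  intro f hf hf0
  obtain ⟨g₁, hg₁, hexp₁⟩ := h₁ f (hf.mono subset_union_left) fun x hx => hf0 x (Or.inl hx)
  obtain ⟨g₂, hg₂, hexp₂⟩ := h₂ f (hf.mono subset_union_right) fun x hx => hf0 x (Or.inr hx)
  have exp_diff : ∀ x ∈ K₁ ∩ K₂, Complex.exp (g₁ x - g₂ x) = 1 := fun x hx => by
    rw [Complex.exp_sub, hexp₁ x hx.1, hexp₂ x hx.2, div_self (hf0 x (Or.inl hx.1))]
  obtain ⟨c, hc, heq⟩ : ∃ c, Complex.exp c = 1 ∧ ∀ x ∈ K₁ ∩ K₂, g₁ x - g₂ x = c := by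
    rcases (K₁ ∩ K₂).eq_empty_or_nonempty with hempty | ⟨a, ha⟩
    · exact ⟨0, Complex.exp_zero, by simp [hempty]⟩
    · exact ⟨_, exp_diff a ha, fun x hx => eq_of_exp_eq_one_of_isPreconnected hconn
        ((hg₁.mono inter_subset_left).sub (hg₂.mono inter_subset_right)) exp_diff hx ha⟩
  refine ⟨K₁.piecewise g₁ fun x => g₂ x + c,
    continuousOn_piecewise_union hK₁ hK₂ hg₁ (hg₂.add continuousOn_const)
      fun x hx => sub_eq_iff_eq_add'.1 (heq x hx), fun x hx => ?_⟩
  by_cases hx₁ : x ∈ K₁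
  · rw [piecewise_eq_of_mem _ _ _ hx₁, hexp₁ x hx₁]
  · rw [piecewise_eq_of_notMem _ _ _ hx₁, Complex.exp_add, hc, mul_one,
      hexp₂ x (hx.resolve_left hx₁)]

theorem exists_log_discrepancy {K₁ K₂ : Set X} (h₁ : IsLogTrivial K₁) (h₂ : IsLogTrivial K₂)
    {a b : X} (ha : a ∈ K₁ ∩ K₂) (hb : b ∈ K₁ ∩ K₂) {f : X → ℂ} (hf : ContinuousOn f (K₁ ∪ K₂))
    (hf0 : ∀ x ∈ K₁ ∪ K₂, f x ≠ 0) :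
    ∃ (k : ℤ) (g₁ g₂ : X → ℂ), ContinuousOn g₁ K₁ ∧ ContinuousOn g₂ K₂ ∧
      (∀ x ∈ K₁, Complex.exp (g₁ x) = f x) ∧ (∀ x ∈ K₂, Complex.exp (g₂ x) = f x) ∧
      g₁ a = g₂ a ∧ g₁ b = g₂ b + k * (2 * Real.pi * Complex.I) := by
  obtain ⟨g₁, hg₁, hexp₁⟩ := h₁ f (hf.mono subset_union_left) fun x hx => hf0 x (Or.inl hx)
  obtain ⟨g₂, hg₂, hexp₂⟩ := h₂ f (hf.mono subset_union_right) fun x hx => hf0 x (Or.inr hx)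
  obtain ⟨n, hn⟩ := Complex.exp_eq_exp_iff_exists_int.1 ((hexp₁ a ha.1).trans (hexp₂ a ha.2).symm)
  obtain ⟨k, hk⟩ := Complex.exp_eq_exp_iff_exists_int.1 ((hexp₁ b hb.1).trans (hexp₂ b hb.2).symm)
  refine ⟨k - n, g₁, fun x => g₂ x + n * (2 * Real.pi * Complex.I), hg₁,
    hg₂.add continuousOn_const, hexp₁, fun x hx => ?_, hn, ?_⟩
  · rw [Complex.exp_add, Complex.exp_int_mul_two_pi_mul_I, mul_one, hexp₂ x hx]
  · rw [hk]
    push_cast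
    ring

/-- The nonvanishing functions on a union of two log-trivial sets meeting in two points have rank
one modulo exponentials: the discrepancy of the two logarithms at `b` is the only obstruction. -/
theorem exists_log_zpow_mul_zpow {K₁ K₂ : Set X} (hK₁ : IsClosed K₁) (hK₂ : IsClosed K₂)
    (h₁ : IsLogTrivial K₁) (h₂ : IsLogTrivial K₂) {a b : X} (hinter : K₁ ∩ K₂ = {a, b})
    {u v : X → ℂ} (hu : ContinuousOn u (K₁ ∪ K₂)) (hv : ContinuousOn v (K₁ ∪ K₂))
    (hu0 : ∀ x ∈ K₁ ∪ K₂, u x ≠ 0) (hv0 : ∀ x ∈ K₁ ∪ K₂, v x ≠ 0) :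
    ∃ m n : ℤ, (m ≠ 0 ∨ n ≠ 0) ∧ ∃ g : X → ℂ, ContinuousOn g (K₁ ∪ K₂) ∧
      ∀ x ∈ K₁ ∪ K₂, Complex.exp (g x) = u x ^ m * v x ^ n := by
  classical
  have ha : a ∈ K₁ ∩ K₂ := by simp [hinter]
  have hb : b ∈ K₁ ∩ K₂ := by simp [hinter]
  obtain ⟨k, u₁, u₂, hu₁, hu₂, exp_u₁, exp_u₂, hua, hub⟩ :=
    exists_log_discrepancy h₁ h₂ ha hb hu hu0
  obtain ⟨l, v₁, v₂, hv₁, hv₂, exp_v₁, exp_v₂, hva, hvb⟩ :=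
    exists_log_discrepancy h₁ h₂ ha hb hv hv0
  have exists_log : ∀ m n : ℤ, m * k + n * l = 0 → ∃ g : X → ℂ, ContinuousOn g (K₁ ∪ K₂) ∧
      ∀ x ∈ K₁ ∪ K₂, Complex.exp (g x) = u x ^ m * v x ^ n := by
    intro m n hmn
    have hmn' : (m : ℂ) * k + n * l = 0 := by exact_mod_cast hmn
    refine ⟨K₁.piecewise (fun x => m * u₁ x + n * v₁ x) fun x => m * u₂ x + n * v₂ x,
      continuousOn_piecewise_union hK₁ hK₂ (by fun_prop) (by fun_prop) fun x hx => ?_,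
      fun x hx => ?_⟩
    · rw [hinter] at hx
      rcases hx with rfl | rfl
      · simp only [hua, hva]
      · simp only [hub, hvb]
        linear_combination (2 * Real.pi * Complex.I) * hmn'
    · by_cases hx₁ : x ∈ K₁
      · rw [piecewise_eq_of_mem _ _ _ hx₁, Complex.exp_add, Complex.exp_int_mul,
          Complex.exp_int_mul, exp_u₁ x hx₁, exp_v₁ x hx₁]
      · have hx₂ := hx.resolve_left hx₁
        rw [piecewise_eq_of_notMem _ _ _ hx₁, Complex.exp_add, Complex.exp_int_mul,
          Complex.exp_int_mul, exp_u₂ x hx₂, exp_v₂ x hx₂]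
  by_cases hk : k = 0
  · exact ⟨1, 0, Or.inl one_ne_zero, exists_log 1 0 (by simp [hk])⟩
  · exact ⟨l, -k, Or.inr (neg_ne_zero.2 hk), exists_log l (-k) (by ring)⟩

end IsLogTrivial

end Logarithms

/-! ### Eilenberg's criterion -/

section EilenbergPlane

variable {V : Set ℂ} {p : ℂ} {m : ℤ} {u g : ℂ → ℂ}

theorem exists_continuous_eqOn_compl_of_eqOn_frontier (hV : IsOpen V) (hp : p ∈ V)
    (hu : ContinuousOn u (closure V)) (hu0 : ∀ z ∈ closure V, u z ≠ 0) (hg : Continuous g)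
    (hexp : ∀ z ∈ frontier V, Complex.exp (g z) = (z - p) ^ m * u z) :
    ∃ k : ℂ → ℂ, Continuous k ∧ (∀ z, k z ≠ 0) ∧
      ∀ z ∉ V, Complex.exp (g z) = (z - p) ^ m * k z := by
  classical
  have zpow_ne : ∀ z ∉ V, (z - p) ^ m ≠ 0 := fun z hz =>
    zpow_ne_zero _ (sub_ne_zero.2 fun h => hz (h ▸ hp))
  set k : ℂ → ℂ := (closure V).piecewise u fun z => Complex.exp (g z) / (z - p) ^ m with hk
  have hk_in : ∀ z ∈ closure V, k z = u z := fun z hz => piecewise_eq_of_mem _ _ _ hz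
  have hk_out : ∀ z ∉ V, Complex.exp (g z) = (z - p) ^ m * k z := by
    intro z hz
    by_cases hcl : z ∈ closure V
    · rw [hk_in z hcl, hexp z ⟨hcl, by rwa [hV.interior_eq]⟩]
    · rw [hk, piecewise_eq_of_notMem _ _ _ hcl, mul_div_cancel₀ _ (zpow_ne z hz)]
  refine ⟨k, ?_, fun z => ?_, hk_out⟩
  · have cover : closure V ∪ Vᶜ = univ :=
      univ_subset_iff.1 ((union_compl_self V).symm.subset.trans
        (union_subset_union_left _ subset_closure))
    rw [← continuousOn_univ, ← cover]
    refine continuousOn_piecewise_union isClosed_closure hV.isClosed_compl hu ?_ fun z hz => ?_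
    · refine ContinuousOn.div (by fun_prop) (ContinuousOn.zpow₀ (by fun_prop) _ ?_) zpow_ne
      exact fun z hz => Or.inl (sub_ne_zero.2 fun h => hz (h ▸ hp))
    · exact eq_div_of_mul_eq (zpow_ne z hz.2) (by
        rw [mul_comm, hexp z ⟨hz.1, by rw [hV.interior_eq]; exact hz.2⟩])
  · by_cases hz : z ∈ V
    · rw [hk_in z (subset_closure hz)]
      exact hu0 z (subset_closure hz)
    · exact right_ne_zero_of_mul (hk_out z hz ▸ Complex.exp_ne_zero _)

/-- A logarithm on the frontier would extend `z ↦ (z - p) ^ m`, up to a factor with a logarithm on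
the whole plane, to a large circle around `p`. -/
theorem eq_zero_of_exp_eq_zpow_mul_on_frontier (hV : IsOpen V)
    (hbdd : Bornology.IsBounded V) (hp : p ∈ V)
    (hu : ContinuousOn u (closure V)) (hu0 : ∀ z ∈ closure V, u z ≠ 0)
    (hg : ContinuousOn g (frontier V))
    (hexp : ∀ z ∈ frontier V, Complex.exp (g z) = (z - p) ^ m * u z) : m = 0 := by
  obtain ⟨G, hG⟩ := ContinuousMap.exists_restrict_eq (Y := ℂ) (isClosed_frontier (s := V))
    ⟨(frontier V).domRestrict g, continuousOn_iff_continuous_domRestrict.1 hg⟩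
  have hGg : ∀ z ∈ frontier V, G z = g z := fun z hz =>
    congrArg (fun f : C(frontier V, ℂ) => f ⟨z, hz⟩) hG
  obtain ⟨k, hk, hk0, hkV⟩ := exists_continuous_eqOn_compl_of_eqOn_frontier (m := m) hV hp hu hu0
    G.continuous fun z hz => by rw [hGg z hz, hexp z hz]
  obtain ⟨l, hl, hexp_l⟩ := isLogTrivial_univ k hk.continuousOn fun z _ => hk0 z
  have hl' := continuousOn_univ.1 hl
  obtain ⟨R, hR⟩ := hbdd.subset_ball p
  have hRpos : 0 < R := Metric.pos_of_mem_ball (hR hp)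
  refine eq_zero_of_exp_eq_zpow_on_sphere (a := p) hRpos (l := fun z => G z - l z)
    (by fun_prop) fun z hz => ?_
  have hzV : z ∉ V := fun h => (Metric.mem_ball.1 (hR h)).ne hz
  rw [Complex.exp_sub, hexp_l z (mem_univ z), hkV z hzV, mul_div_cancel_right₀ _ (hk0 z)]

theorem not_forall_exp_eq_div {a b : ℂ} (hab : a ≠ b) {l : ℂ → ℂ}
    (hl : ContinuousOn l {a, b}ᶜ) :
    ¬∀ z, z ≠ a → z ≠ b → Complex.exp (l z) = (b - z) / (a - z) := by
  intro hexp
  have hr : 0 < dist b a / 2 := half_pos (dist_pos.2 hab.symm)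
  have ne_left : ∀ z ∈ frontier (Metric.ball a (dist b a / 2)), z ≠ a := by
    rw [frontier_ball a hr.ne']
    exact fun z hz => Metric.ne_of_mem_sphere hz hr.ne'
  have ne_right : ∀ z ∈ closure (Metric.ball a (dist b a / 2)), z ≠ b := by
    rw [closure_ball a hr.ne']
    rintro z hz rfl
    linarith [Metric.mem_closedBall.1 hz]
  have absurd_exponent := eq_zero_of_exp_eq_zpow_mul_on_frontier (m := -1) (u := fun z => z - b)
    Metric.isOpen_ball Metric.isBounded_ball (Metric.mem_ball_self hr) (by fun_prop)
    (fun z hz => sub_ne_zero.2 (ne_right z hz))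
    (hl.mono fun z hz => ?_) fun z hz => ?_
  · simp at absurd_exponent
  · simp [ne_left z hz, ne_right z (frontier_subset_closure hz)]
  · rw [hexp z (ne_left z hz) (ne_right z (frontier_subset_closure hz)), zpow_neg_one,
      inv_mul_eq_div, ← neg_div_neg_eq, neg_sub, neg_sub]

end EilenbergPlane

/-! ### Closed curves in a punctured chart -/

/-- A chart identifying the complement of the point `q` with the plane, as stereographic projection
does for the sphere. -/
structure PuncturedChart (S : Type*) [TopologicalSpace S] (q : S) extends
    OpenPartialHomeomorph S ℂ where
  source_eq : source = {q}ᶜ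
  target_eq : target = univ

namespace PuncturedChart

section Basic

variable {S : Type*} [TopologicalSpace S] {q : S}

instance : CoeFun (PuncturedChart S q) fun _ => S → ℂ := ⟨fun φ => φ.toOpenPartialHomeomorph⟩

variable (φ : PuncturedChart S q)

theorem continuousOn : ContinuousOn φ {q}ᶜ :=
  φ.source_eq ▸ φ.continuousOn_toFun

theorem injOn : InjOn φ {q}ᶜ :=
  φ.source_eq ▸ φ.toOpenPartialHomeomorph.injOn

theorem continuous_symm : Continuous φ.symm :=
  continuousOn_univ.1 (φ.target_eq ▸ φ.continuousOn_invFun)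

theorem symm_ne (z : ℂ) : φ.symm z ≠ q :=
  mem_compl_singleton_iff.1 (φ.source_eq ▸ φ.map_target (φ.target_eq ▸ mem_univ z))

theorem apply_symm (z : ℂ) : φ (φ.symm z) = z :=
  φ.right_inv (φ.target_eq ▸ mem_univ z)

theorem symm_apply {x : S} (hx : x ≠ q) : φ.symm (φ x) = x :=
  φ.left_inv (φ.source_eq ▸ mem_compl_singleton_iff.2 hx)

theorem sub_ne_zero {x y : S} (hx : x ≠ q) (hy : y ≠ q) (hxy : x ≠ y) : φ x - φ y ≠ 0 :=
  _root_.sub_ne_zero.2 fun h => hxy (φ.injOn hx hy h)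

theorem isOpen_image {U : Set S} (hU : IsOpen U) (hq : q ∉ U) : IsOpen (φ '' U) :=
  φ.isOpen_image_of_subset_source hU (φ.source_eq ▸ subset_compl_singleton_iff.2 hq)

theorem isCompact_image [CompactSpace S] {K : Set S} (hK : IsClosed K) (hq : q ∉ K) :
    IsCompact (φ '' K) :=
  hK.isCompact.image_of_continuousOn (φ.continuousOn.mono (subset_compl_singleton_iff.2 hq))

variable [CompactSpace S] {U : Set S} (hq : q ∉ closure U)

include hq in
theorem closure_image_subset : closure (φ '' U) ⊆ φ '' closure U :=
  closure_minimal (image_mono subset_closure) (φ.isCompact_image isClosed_closure hq).isClosed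

include hq in
theorem frontier_image_subset (hU : IsOpen U) : frontier (φ '' U) ⊆ φ '' frontier U := by
  rw [(φ.isOpen_image hU fun h => hq (subset_closure h)).frontier_eq, hU.frontier_eq]
  rintro z ⟨hz, hzU⟩
  obtain ⟨x, hx, rfl⟩ := φ.closure_image_subset hq hz
  exact ⟨x, ⟨hx, fun h => hzU (mem_image_of_mem φ h)⟩, rfl⟩

include hq in
theorem eq_zero_of_exp_eq_zpow_mul_on_frontier (hU : IsOpen U) {p : S} (hp : p ∈ U) {m : ℤ}
    {u g : S → ℂ} (hu : ContinuousOn u (closure U)) (hu0 : ∀ x ∈ closure U, u x ≠ 0)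
    (hg : ContinuousOn g (frontier U))
    (hexp : ∀ x ∈ frontier U, Complex.exp (g x) = (φ x - φ p) ^ m * u x) : m = 0 := by
  have symm_image : ∀ x ∈ closure U, φ.symm (φ x) = x := fun x hx =>
    φ.symm_apply fun h => hq (h ▸ hx)
  have mapsTo_closure : MapsTo φ.symm (closure (φ '' U)) (closure U) := fun z hz => by
    obtain ⟨x, hx, rfl⟩ := φ.closure_image_subset hq hz
    rwa [symm_image x hx]
  have mapsTo_frontier : MapsTo φ.symm (frontier (φ '' U)) (frontier U) := fun z hz => by
    obtain ⟨x, hx, rfl⟩ := φ.frontier_image_subset hq hU hz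
    rwa [symm_image x hx.1]
  refine _root_.eq_zero_of_exp_eq_zpow_mul_on_frontier (V := φ '' U)
    (u := u ∘ φ.symm) (g := g ∘ φ.symm)
    (φ.isOpen_image hU fun h => hq (subset_closure h))
    ((φ.isCompact_image isClosed_closure hq).isBounded.subset (image_mono subset_closure))
    (mem_image_of_mem φ hp) (hu.comp φ.continuous_symm.continuousOn mapsTo_closure)
    (fun z hz => hu0 _ (mapsTo_closure hz))
    (hg.comp φ.continuous_symm.continuousOn mapsTo_frontier) fun z hz => ?_
  simpa only [Function.comp_apply, φ.apply_symm] using hexp _ (mapsTo_frontier hz)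

include φ hq in
theorem eq_empty_of_frontier_subset (hU : IsOpen U) {K : Set S} (hK : IsLogTrivial K)
    (hqK : q ∉ K) (hfr : frontier U ⊆ K) (hdisj : Disjoint U K) : U = ∅ := by
  by_contra hne
  obtain ⟨p, hp⟩ := nonempty_iff_ne_empty.2 hne
  have hpq : p ≠ q := fun h => hq (subset_closure (h ▸ hp))
  obtain ⟨g, hg, hexp⟩ := hK (fun x => φ x - φ p)
    ((φ.continuousOn.mono (subset_compl_singleton_iff.2 hqK)).sub continuousOn_const)
    fun x hx => φ.sub_ne_zero (ne_of_mem_of_not_mem hx hqK) hpq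
      (disjoint_left.1 hdisj hp |> ne_of_mem_of_not_mem hx)
  exact one_ne_zero (φ.eq_zero_of_exp_eq_zpow_mul_on_frontier hq hU hp (m := 1) (u := fun _ => 1)
    continuousOn_const (fun _ _ => one_ne_zero) (hg.mono hfr) fun x hx => by
      simp [hexp x (hfr hx)])

end Basic

section Separation

variable {S : Type*} [TopologicalSpace S] [CompactSpace S] {q : S} (φ : PuncturedChart S q)

include φ in
theorem eq_empty_or_union_eq_univ_of_isLogTrivial {K U : Set S} (hK : IsLogTrivial K)
    (hKclosed : IsClosed K) (hqK : q ∉ K) (hU : IsOpen U) (hfr : frontier U ⊆ K)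
    (hdisj : Disjoint U K) : U = ∅ ∨ U ∪ K = univ := by
  by_cases hqU : q ∈ U
  · right
    have union_eq : U ∪ K = closure U ∪ K := by
      rw [closure_eq_self_union_frontier, union_assoc, union_eq_self_of_subset_left hfr]
    have hclosed : IsClosed (U ∪ K) := union_eq ▸ isClosed_closure.union hKclosed
    have hfr' : frontier (U ∪ K)ᶜ ⊆ K := by
      rw [frontier_compl]
      refine (frontier_union_subset _ _).trans (union_subset ?_ ?_)
      · exact inter_subset_left.trans hfr
      · exact inter_subset_right.trans hKclosed.frontier_subset
    have hq : q ∉ closure (U ∪ K)ᶜ := fun h =>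
      disjoint_left.1 ((disjoint_compl_right.mono_left subset_union_left).closure_right hU) hqU h
    exact compl_empty_iff.1 (φ.eq_empty_of_frontier_subset hq hclosed.isOpen_compl hK hqK hfr'
      (disjoint_compl_left.mono_right subset_union_right))
  · left
    refine φ.eq_empty_of_frontier_subset ?_ hU hK hqK hfr hdisj
    rw [closure_eq_self_union_frontier]
    exact fun h => h.elim hqU fun h => hqK (hfr h)

theorem eq_zero_of_log_zpow_mul_zpow {K U₁ U₂ : Set S} (hqK : q ∉ K) (hU₁ : IsOpen U₁)
    (hU₂ : IsOpen U₂) (hdisj : Disjoint U₁ U₂) (hqU₁ : q ∉ U₁) (hqU₂ : q ∉ U₂)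
    (hfr : frontier U₁ ⊆ K) {p₁ p₂ : S} (hp₁ : p₁ ∈ U₁) (hp₂ : p₂ ∈ U₂) {m k : ℤ} {g : S → ℂ}
    (hg : ContinuousOn g K)
    (hexp : ∀ x ∈ K, Complex.exp (g x) = (φ x - φ p₁) ^ m * (φ x - φ p₂) ^ k) : m = 0 := by
  have hq : q ∉ closure U₁ := by
    rw [closure_eq_self_union_frontier]
    exact fun h => h.elim hqU₁ fun h => hqK (hfr h)
  have sub_ne : ∀ x ∈ closure U₁, φ x - φ p₂ ≠ 0 := fun x hx =>
    φ.sub_ne_zero (ne_of_mem_of_not_mem hx hq) (ne_of_mem_of_not_mem hp₂ hqU₂)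
      (ne_of_mem_of_not_mem hx (disjoint_right.1 (hdisj.closure_left hU₂) hp₂))
  have continuousOn_sub : ContinuousOn (fun x => φ x - φ p₂) (closure U₁) :=
    (φ.continuousOn.mono (subset_compl_singleton_iff.2 hq)).sub continuousOn_const
  exact φ.eq_zero_of_exp_eq_zpow_mul_on_frontier hq hU₁ hp₁
    (continuousOn_sub.zpow₀ k fun x hx => Or.inl (sub_ne x hx))
    (fun x hx => zpow_ne_zero k (sub_ne x hx)) (hg.mono hfr) fun x hx => hexp x (hfr hx)

include φ in
/-- Two disjoint bounded regions would make the functions `φ x - φ p₁` and `φ x - φ p₂`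
independent modulo exponentials. -/
theorem eq_empty_or_eq_empty_of_frontier_subset {K₁ K₂ U₁ U₂ : Set S} (hK₁ : IsClosed K₁)
    (hK₂ : IsClosed K₂) (h₁ : IsLogTrivial K₁) (h₂ : IsLogTrivial K₂) {a b : S}
    (hinter : K₁ ∩ K₂ = {a, b}) (hqK : q ∉ K₁ ∪ K₂) (hU₁ : IsOpen U₁) (hU₂ : IsOpen U₂)
    (hdisj : Disjoint U₁ U₂) (hqU₁ : q ∉ U₁) (hqU₂ : q ∉ U₂) (hfr₁ : frontier U₁ ⊆ K₁ ∪ K₂)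
    (hfr₂ : frontier U₂ ⊆ K₁ ∪ K₂) (hd₁ : Disjoint U₁ (K₁ ∪ K₂)) (hd₂ : Disjoint U₂ (K₁ ∪ K₂)) :
    U₁ = ∅ ∨ U₂ = ∅ := by
  by_contra! hne
  obtain ⟨⟨p₁, hp₁⟩, ⟨p₂, hp₂⟩⟩ := hne
  have continuousOn_sub : ∀ p, ContinuousOn (fun x => φ x - φ p) (K₁ ∪ K₂) := fun p =>
    (φ.continuousOn.mono (subset_compl_singleton_iff.2 hqK)).sub continuousOn_const
  have sub_ne : ∀ p, p ≠ q → p ∉ K₁ ∪ K₂ → ∀ x ∈ K₁ ∪ K₂, φ x - φ p ≠ 0 := fun p hpq hpK x hx =>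
    φ.sub_ne_zero (ne_of_mem_of_not_mem hx hqK) hpq (ne_of_mem_of_not_mem hx hpK)
  obtain ⟨m, k, hmk, g, hg, hexp⟩ := IsLogTrivial.exists_log_zpow_mul_zpow hK₁ hK₂ h₁ h₂ hinter
    (continuousOn_sub p₁) (continuousOn_sub p₂)
    (sub_ne p₁ (ne_of_mem_of_not_mem hp₁ hqU₁) (disjoint_left.1 hd₁ hp₁))
    (sub_ne p₂ (ne_of_mem_of_not_mem hp₂ hqU₂) (disjoint_left.1 hd₂ hp₂))
  have hm := φ.eq_zero_of_log_zpow_mul_zpow hqK hU₁ hU₂ hdisj hqU₁ hqU₂ hfr₁ hp₁ hp₂ hg hexp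
  have hk := φ.eq_zero_of_log_zpow_mul_zpow hqK hU₂ hU₁ hdisj.symm hqU₂ hqU₁ hfr₂ hp₂ hp₁ hg
    fun x hx => by rw [hexp x hx, mul_comm]
  exact hmk.elim (· hm) (· hk)

end Separation

section Arc

variable {S : Type*} [TopologicalSpace S] [T2Space S] {f : ℝ → S} {P : Set S}

theorem isClosed_image_Icc {s t : ℝ} (hf : ContinuousOn f (Icc s t)) : IsClosed (f '' Icc s t) :=
  (isCompact_Icc.image_of_continuousOn hf).isClosed

theorem isLogTrivial_union_image_Icc_union_image_Icc [NormalSpace S]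
    (hf : ContinuousOn f (Icc 0 1)) (hinj : InjOn f (Icc 0 1)) (hP : IsClosed P)
    (hPlog : IsLogTrivial P) (hfP : f '' Icc 0 1 ∩ P ⊆ {f 0, f 1}) {s t : ℝ} (hs : 0 ≤ s)
    (hst : s < t) (ht : t ≤ 1) : IsLogTrivial (P ∪ f '' Icc 0 s ∪ f '' Icc t 1) := by
  have sub_left : Icc 0 s ⊆ Icc (0 : ℝ) 1 := Icc_subset_Icc_right (by linarith)
  have sub_right : Icc t 1 ⊆ Icc (0 : ℝ) 1 := Icc_subset_Icc_left (by linarith)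
  have disjoint_ends : Disjoint (f '' Icc 0 s) (f '' Icc t 1) :=
    disjoint_image_image fun x hx y hy h => by
      have := hinj (sub_left hx) (sub_right hy) h
      linarith [hx.2, hy.1]
  have mem_left : f 0 ∈ f '' Icc 0 s := mem_image_of_mem f (left_mem_Icc.2 hs)
  have mem_right : f 1 ∈ f '' Icc t 1 := mem_image_of_mem f (right_mem_Icc.2 ht)
  have inter_left : P ∩ f '' Icc 0 s ⊆ {f 0} := fun x hx =>
    (hfP ⟨image_mono sub_left hx.2, hx.1⟩).resolve_right fun h =>
      disjoint_left.1 disjoint_ends hx.2 (h ▸ mem_right)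
  have inter_right : (P ∪ f '' Icc 0 s) ∩ f '' Icc t 1 ⊆ {f 1} := by
    rintro x ⟨hxP | hx, hxt⟩
    · exact (hfP ⟨image_mono sub_right hxt, hxP⟩).resolve_left fun h =>
        disjoint_left.1 disjoint_ends mem_left (h ▸ hxt)
    · exact absurd hxt (disjoint_left.1 disjoint_ends hx)
  have closed_left := isClosed_image_Icc (hf.mono sub_left)
  refine .union (hP.union closed_left) (isClosed_image_Icc (hf.mono sub_right))
    (.union hP closed_left hPlog ?_ (subsingleton_singleton.anti inter_left).isPreconnected) ?_
    (subsingleton_singleton.anti inter_right).isPreconnected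
  · exact .image_Icc hs (hf.mono sub_left) (hinj.mono sub_left)
  · exact .image_Icc ht (hf.mono sub_right) (hinj.mono sub_right)

theorem exists_Ioo_mapsTo_of_isOpen {X : Type*} [TopologicalSpace X] {f : ℝ → X} {N : Set X}
    (hf : ContinuousOn f (Icc 0 1)) (hN : IsOpen N) {τ : ℝ} (hτ : τ ∈ Ioo (0 : ℝ) 1)
    (hmem : f τ ∈ N) :
    ∃ s t, 0 ≤ s ∧ s < t ∧ t ≤ 1 ∧ MapsTo f (Ioo s t) N := by
  have hcont : ContinuousAt f τ := hf.continuousAt (Icc_mem_nhds hτ.1 hτ.2)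
  obtain ⟨l, u, hlu, hsub⟩ := mem_nhds_iff_exists_Ioo_subset.1 (hcont (hN.mem_nhds hmem))
  exact ⟨max l 0, min u 1, le_max_right _ _,
    (max_lt hlu.1 hτ.1).trans (lt_min hlu.2 hτ.2), min_le_right _ _,
    (Ioo_subset_Ioo (le_max_left _ _) (min_le_left _ _)).trans hsub⟩

variable [CompactSpace S] {q : S} (φ : PuncturedChart S q)

include φ in
/-- Were a point of the arc not in the closure of `U`, the frontier of `U` would lie in the closed
curve with a piece of the arc removed, which is log-trivial and hence does not separate. -/
theorem image_Icc_subset_closure (hf : ContinuousOn f (Icc 0 1)) (hinj : InjOn f (Icc 0 1))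
    (hP : IsClosed P) (hPlog : IsLogTrivial P) (hfP : f '' Icc 0 1 ∩ P ⊆ {f 0, f 1})
    (hq : q ∉ f '' Icc 0 1 ∪ P) {U : Set S} (hU : IsOpen U) (hUne : U.Nonempty)
    (hfr : frontier U ⊆ f '' Icc 0 1 ∪ P) (hdisj : Disjoint U (f '' Icc 0 1 ∪ P))
    (hex : U ∪ (f '' Icc 0 1 ∪ P) ≠ univ) : f '' Icc 0 1 ⊆ closure U := by
  have closure_Ioo_eq : closure (Ioo (0 : ℝ) 1) = Icc 0 1 := closure_Ioo zero_ne_one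
  rw [← closure_Ioo_eq]
  refine (ContinuousOn.image_closure (by rwa [closure_Ioo_eq])).trans
    (closure_minimal ?_ isClosed_closure)
  rintro _ ⟨τ, hτ, rfl⟩
  by_contra hτU
  obtain ⟨s, t, hs, hst, ht, hN⟩ :=
    exists_Ioo_mapsTo_of_isOpen hf isClosed_closure.isOpen_compl hτ hτU
  set K := P ∪ f '' Icc 0 s ∪ f '' Icc t 1
  have sub_left : Icc 0 s ⊆ Icc (0 : ℝ) 1 := Icc_subset_Icc_right (by linarith)
  have sub_right : Icc t 1 ⊆ Icc (0 : ℝ) 1 := Icc_subset_Icc_left (by linarith)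
  have hKclosed : IsClosed K := (hP.union (isClosed_image_Icc (hf.mono sub_left))).union
    (isClosed_image_Icc (hf.mono sub_right))
  have hKsub : K ⊆ f '' Icc 0 1 ∪ P := union_subset
    (union_subset subset_union_right ((image_mono sub_left).trans subset_union_left))
    ((image_mono sub_right).trans subset_union_left)
  have hfrK : frontier U ⊆ K := by
    intro x hx
    rcases hfr hx with ⟨r, hr, rfl⟩ | hxP
    · by_cases hrs : r ≤ s
      · exact Or.inl (Or.inr ⟨r, ⟨hr.1, hrs⟩, rfl⟩)
      · refine Or.inr ⟨r, ⟨not_lt.1 fun hrt => ?_, hr.2⟩, rfl⟩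
        exact hN ⟨not_le.1 hrs, hrt⟩ (frontier_subset_closure hx)
    · exact Or.inl (Or.inl hxP)
  rcases φ.eq_empty_or_union_eq_univ_of_isLogTrivial
    (isLogTrivial_union_image_Icc_union_image_Icc hf hinj hP hPlog hfP hs hst ht) hKclosed
    (fun h => hq (hKsub h)) hU hfrK (hdisj.mono_right hKsub) with h | h
  · exact hUne.ne_empty h
  · exact hex (univ_subset_iff.1 (h ▸ union_subset_union_right U hKsub))

end Arc

end PuncturedChart

/-! ### Angles along an arc -/

theorem exists_log_of_homotopy {X : Type*} [TopologicalSpace X] {F : unitInterval × X → ℂ}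
    (hF : Continuous F) (hne : ∀ p, F p ≠ 0) (h0 : ∀ x, F (0, x) = 1) :
    ∃ L : unitInterval × X → ℂ, Continuous L ∧ (∀ x, L (0, x) = 0) ∧
      ∀ p, Complex.exp (L p) = F p := by
  let H : C(unitInterval × X, {z : ℂ // z ≠ 0}) := ⟨fun p => ⟨F p, hne p⟩, hF.subtype_mk hne⟩
  have H_zero : ∀ x, H (0, x) =
      (⟨_, Complex.exp_ne_zero (ContinuousMap.const X (0 : ℂ) x)⟩ : {z : ℂ // z ≠ 0}) := fun x =>
    Subtype.ext (by simp [H, h0])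
  refine ⟨Complex.isCoveringMap_exp.liftHomotopy H (.const X 0) H_zero, ContinuousMap.continuous _,
    Complex.isCoveringMap_exp.liftHomotopy_zero H _ H_zero, fun p => ?_⟩
  exact congrArg Subtype.val
    (congrFun (Complex.isCoveringMap_exp.liftHomotopy_lifts H _ H_zero) p)

namespace PuncturedChart

variable {S : Type*} [TopologicalSpace S] {q : S} (φ : PuncturedChart S q)

open Classical in
/-- The function `x ↦ (φ a - φ x)⁻¹`, extended by its limit `0` at the puncture. -/
def invSub (a : S) : S → ℂ := Function.update (fun x => (φ a - φ x)⁻¹) q 0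

@[simp]
theorem invSub_self (a : S) : φ.invSub a q = 0 := by classical exact Function.update_self ..

theorem invSub_of_ne (a : S) {x : S} (hx : x ≠ q) : φ.invSub a x = (φ a - φ x)⁻¹ := by
  classical exact Function.update_of_ne hx ..

theorem one_add_mul_invSub {a x : S} (ha : a ≠ q) (hx : x ≠ q) (hax : a ≠ x) (z : ℂ) :
    1 + (z - φ a) * φ.invSub a x = (z - φ x) / (φ a - φ x) := by
  have := φ.sub_ne_zero ha hx hax
  rw [φ.invSub_of_ne a hx]
  field_simp
  ring

variable [T2Space S]

theorem tendsto_cobounded : Filter.Tendsto φ (𝓝[≠] q) (Bornology.cobounded ℂ) := by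
  rw [← tendsto_norm_atTop_iff_cobounded, Filter.tendsto_atTop]
  intro r
  have hcompact : IsCompact (φ.symm '' Metric.closedBall 0 r) :=
    (isCompact_closedBall 0 r).image φ.continuous_symm
  have hq : q ∉ φ.symm '' Metric.closedBall 0 r := fun ⟨z, _, hz⟩ => φ.symm_ne z hz
  filter_upwards [nhdsWithin_le_nhds (hcompact.isClosed.isOpen_compl.mem_nhds hq),
    self_mem_nhdsWithin] with x hx hxq
  by_contra! hlt
  exact hx ⟨φ x, mem_closedBall_zero_iff.2 hlt.le, φ.symm_apply hxq⟩

theorem continuousOn_invSub {a : S} (ha : a ≠ q) : ContinuousOn (φ.invSub a) {a}ᶜ := by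
  classical
  refine fun x hx => ContinuousAt.continuousWithinAt ?_
  rcases eq_or_ne x q with rfl | hxq
  · refine continuousAt_update_same.2 (Filter.tendsto_inv₀_cobounded.comp ?_)
    exact (tendsto_const_sub_cobounded (φ a)).comp φ.tendsto_cobounded
  · exact (continuousAt_update_of_ne hxq).2 <| (continuousAt_const.sub <|
      φ.continuousOn.continuousAt (isOpen_compl_singleton.mem_nhds hxq)).inv₀
        (φ.sub_ne_zero ha hxq (Ne.symm hx))

/-- Contracting the arc to its initial point deforms the quotient, as a function of `x`, to `1`;
lift that homotopy through the exponential. -/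
theorem exists_log_div {f : ℝ → S} (hf : ContinuousOn f (Icc 0 1)) (hq : q ∉ f '' Icc 0 1) :
    ∃ θ : S → ℂ, ContinuousOn θ (f '' Icc 0 1)ᶜ ∧ θ q = 0 ∧ ∀ x, x ∉ f '' Icc 0 1 → x ≠ q →
      Complex.exp (θ x) = (φ (f 1) - φ x) / (φ (f 0) - φ x) := by
  set K := f '' Icc 0 1
  have mem_K : ∀ t : unitInterval, f t ∈ K := fun t => mem_image_of_mem f t.2
  have f_zero_mem : f 0 ∈ K := mem_K 0
  have ne_q : ∀ x ∈ K, x ≠ q := fun x hx => ne_of_mem_of_not_mem hx hq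
  let F : unitInterval × ↥Kᶜ → ℂ := fun p => 1 + (φ (f p.1) - φ (f 0)) * φ.invSub (f 0) p.2
  have F_eq : ∀ (t : unitInterval) (x : ↥Kᶜ), (x : S) ≠ q →
      F (t, x) = (φ (f t) - φ x) / (φ (f 0) - φ x) := fun t x hx =>
    φ.one_add_mul_invSub (ne_q _ f_zero_mem) hx (ne_of_mem_of_not_mem f_zero_mem x.2) _
  have F_ne : ∀ p, F p ≠ 0 := fun ⟨t, x⟩ => by
    by_cases hx : (x : S) = q
    · simp [F, hx]
    · rw [F_eq t x hx]
      exact div_ne_zero (φ.sub_ne_zero (ne_q _ (mem_K t)) hx (ne_of_mem_of_not_mem (mem_K t) x.2))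
        (φ.sub_ne_zero (ne_q _ f_zero_mem) hx (ne_of_mem_of_not_mem f_zero_mem x.2))
  have continuous_arc : Continuous fun t : unitInterval => φ (f t) :=
    φ.continuousOn.comp_continuous (continuousOn_iff_continuous_domRestrict.1 hf)
      fun t => ne_q _ (mem_K t)
  have continuous_inv : Continuous fun x : ↥Kᶜ => φ.invSub (f 0) x :=
    (φ.continuousOn_invSub (ne_q _ f_zero_mem)).comp_continuous continuous_subtype_val
      fun x => (ne_of_mem_of_not_mem f_zero_mem x.2).symm
  obtain ⟨L, hL, L_zero, exp_L⟩ := exists_log_of_homotopy (F := F)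
    (continuous_const.add (((continuous_arc.comp continuous_fst).sub continuous_const).mul
      (continuous_inv.comp continuous_snd))) F_ne
    fun x => by simp [F]
  let θ : S → ℂ := Function.extend Subtype.val (fun x : ↥Kᶜ => L (1, x)) 0
  have θ_eq : ∀ x : ↥Kᶜ, θ x = L (1, x) := Subtype.val_injective.extend_apply _ _
  refine ⟨θ, ?_, ?_, fun x hx hxq => ?_⟩
  · rw [continuousOn_iff_continuous_domRestrict]
    exact (hL.comp (by fun_prop : Continuous fun x : ↥Kᶜ => ((1 : unitInterval), x))).congr
      fun x => (θ_eq x).symm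
  · rw [θ_eq ⟨q, hq⟩, ← L_zero ⟨q, hq⟩]
    exact eq_of_exp_eq_one_of_isPreconnected isPreconnected_univ (g := fun t => L (t, ⟨q, hq⟩))
      (by fun_prop) (fun t _ => by simp [exp_L, F]) (mem_univ _) (mem_univ _)
  · rw [θ_eq ⟨x, hx⟩, exp_L]
    exact F_eq 1 ⟨x, hx⟩ hxq

end PuncturedChart

/-! ### Arcs and triangles of a good drawing -/

/-- The three points are pairwise distinct. -/
structure Distinct {α : Type*} (a b c : α) : Prop where
  ne₁₂ : a ≠ b
  ne₂₃ : b ≠ c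
  ne₃₁ : c ≠ a

namespace Distinct

variable {α : Type*} {a b c : α}

theorem rotate (h : Distinct a b c) : Distinct b c a := ⟨h.2, h.3, h.1⟩

theorem swap (h : Distinct a b c) : Distinct b a c := ⟨h.1.symm, h.3.symm, h.2.symm⟩

end Distinct

namespace GoodDrawing

variable {n : ℕ} {S : Type*} [TopologicalSpace S] (D : GoodDrawing n S) {a b c d : Fin n}

theorem tri_eq_union (a b c : Fin n) :
    D.tri a b c = D.arc a b ∪ (D.arc b c ∪ D.arc c a) := by
  rw [tri, D.arc_symm c a, union_assoc]

theorem tri_rotate (a b c : Fin n) : D.tri b c a = D.tri a b c := by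
  rw [tri, tri, D.arc_symm b a, D.arc_symm c a]
  ac_rfl

theorem tri_swap (a b c : Fin n) : D.tri b a c = D.tri a b c := by
  simp only [tri, D.arc_symm b a, union_right_comm]

theorem vtx_mem_arc_left (h : a ≠ b) : D.vtx a ∈ D.arc a b := by
  obtain ⟨f, -, -, h₀, -, harc⟩ := D.isArc a b h
  exact harc ▸ ⟨0, left_mem_Icc.2 zero_le_one, h₀⟩

theorem vtx_mem_arc_right (h : a ≠ b) : D.vtx b ∈ D.arc a b :=
  D.arc_symm b a ▸ D.vtx_mem_arc_left h.symm

theorem exists_mem_arc_ne_vtx (h : a ≠ b) : ∃ p ∈ D.arc a b, p ≠ D.vtx a ∧ p ≠ D.vtx b := by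
  obtain ⟨f, -, hinj, h₀, h₁, harc⟩ := D.isArc a b h
  refine ⟨f (1 / 2), harc ▸ mem_image_of_mem f (by norm_num), ?_, ?_⟩
  · exact h₀ ▸ hinj.ne (by norm_num) (by norm_num) (by norm_num)
  · exact h₁ ▸ hinj.ne (by norm_num) (by norm_num) (by norm_num)

theorem vtx_notMem_tri (h : Distinct a b c) (hda : d ≠ a) (hdb : d ≠ b) (hdc : d ≠ c) :
    D.vtx d ∉ D.tri a b c := by
  rintro ((hd | hd) | hd)
  · exact D.vtx_not_mem a b d h.ne₁₂ hda hdb hd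
  · exact D.vtx_not_mem b c d h.ne₂₃ hdb hdc hd
  · exact D.vtx_not_mem a c d h.ne₃₁.symm hda hdc hd

theorem arc_inter_arc (h : Distinct a b c) : D.arc a b ∩ D.arc b c = {D.vtx b} := by
  rw [D.arc_symm a b]
  exact D.adj_arcs b a c h.ne₁₂.symm h.ne₂₃ h.ne₃₁.symm

theorem arc_inter_path (h : Distinct a b c) :
    D.arc a b ∩ (D.arc b c ∪ D.arc c a) = {D.vtx a, D.vtx b} := by
  rw [inter_union_distrib_left, D.arc_inter_arc h, inter_comm, D.arc_inter_arc h.rotate.rotate,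
    singleton_union, pair_comm]

theorem notMem_path (h : Distinct a b c) {x : S} (hx : x ∈ D.arc a b) (hxa : x ≠ D.vtx a)
    (hxb : x ≠ D.vtx b) : x ∉ D.arc b c ∪ D.arc c a := fun hx' => by
  have : x ∈ ({D.vtx a, D.vtx b} : Set S) := D.arc_inter_path h ▸ ⟨hx, hx'⟩
  exact this.elim hxa hxb

variable [T2Space S]

theorem isClosed_arc (h : a ≠ b) : IsClosed (D.arc a b) := by
  obtain ⟨f, hf, -, -, -, harc⟩ := D.isArc a b h
  exact harc ▸ (isCompact_Icc.image_of_continuousOn hf).isClosed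

theorem isClosed_path (h : Distinct a b c) : IsClosed (D.arc b c ∪ D.arc c a) :=
  (D.isClosed_arc h.ne₂₃).union (D.isClosed_arc h.ne₃₁)

theorem isClosed_tri (h : Distinct a b c) : IsClosed (D.tri a b c) :=
  D.tri_eq_union a b c ▸ (D.isClosed_arc h.ne₁₂).union (D.isClosed_path h)

variable [NormalSpace S]

theorem isLogTrivial_arc (h : a ≠ b) : IsLogTrivial (D.arc a b) := by
  obtain ⟨f, hf, hinj, -, -, harc⟩ := D.isArc a b h
  exact harc ▸ .image_Icc zero_le_one hf hinj

theorem isLogTrivial_path (h : Distinct a b c) : IsLogTrivial (D.arc b c ∪ D.arc c a) :=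
  .union (D.isClosed_arc h.ne₂₃) (D.isClosed_arc h.ne₃₁) (D.isLogTrivial_arc h.ne₂₃)
    (D.isLogTrivial_arc h.ne₃₁) (D.arc_inter_arc h.rotate ▸ isPreconnected_singleton)

end GoodDrawing

/-! ### Winding numbers of triangles -/

/-- A choice, for each edge `uv` of a drawing avoiding `q`, of a logarithm of
`(φ (vtx v) - φ x) / (φ (vtx u) - φ x)` off the arc: its imaginary part is the angle under which the
arc is seen from `x`. -/
structure AngleSystem {n : ℕ} {S : Type*} [TopologicalSpace S] (D : GoodDrawing n S) {q : S}
    (φ : PuncturedChart S q) where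
  base_notMem_arc : ∀ u v, u ≠ v → q ∉ D.arc u v
  angle : Fin n → Fin n → S → ℂ
  angle_symm : ∀ u v x, angle v u x = -angle u v x
  continuousOn_angle : ∀ u v, u ≠ v → ContinuousOn (angle u v) (D.arc u v)ᶜ
  angle_base : ∀ u v, angle u v q = 0
  exp_angle : ∀ u v, u ≠ v → ∀ x, x ∉ D.arc u v → x ≠ q →
    Complex.exp (angle u v x) = (φ (D.vtx v) - φ x) / (φ (D.vtx u) - φ x)

namespace AngleSystem

variable {n : ℕ} {S : Type*} [TopologicalSpace S] {D : GoodDrawing n S} {q : S}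
  {φ : PuncturedChart S q}

protected theorem nonempty [T2Space S] (hq : ∀ u v, u ≠ v → q ∉ D.arc u v) :
    Nonempty (AngleSystem D φ) := by
  have exists_angle : ∀ u v : Fin n, ∃ θ : S → ℂ, u ≠ v → ContinuousOn θ (D.arc u v)ᶜ ∧ θ q = 0 ∧
      ∀ x, x ∉ D.arc u v → x ≠ q →
        Complex.exp (θ x) = (φ (D.vtx v) - φ x) / (φ (D.vtx u) - φ x) := fun u v => by
    by_cases huv : u = v
    · exact ⟨0, fun h => absurd huv h⟩
    · obtain ⟨f, hf, -, h₀, h₁, harc⟩ := D.isArc u v huv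
      obtain ⟨θ, hθ⟩ := φ.exists_log_div hf (harc ▸ hq u v huv)
      exact ⟨θ, fun _ => by rwa [harc, ← h₀, ← h₁]⟩
  choose θ hθ using exists_angle
  let T : Fin n → Fin n → S → ℂ := fun u v =>
    if u < v then θ u v else if v < u then -θ v u else 0
  have T_of_lt : ∀ {u v}, u < v → T u v = θ u v := fun h => if_pos h
  have T_of_gt : ∀ {u v}, v < u → T u v = -θ v u := fun h => by
    simp only [T, h.not_gt, h, if_true, if_false]
  have T_self : ∀ u, T u u = 0 := fun u => by simp only [T, lt_irrefl, if_false]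
  refine ⟨⟨hq, T, fun u v x => ?_, fun u v huv => ?_, fun u v => ?_, fun u v huv x hx hxq => ?_⟩⟩
  · rcases lt_trichotomy u v with h | rfl | h
    · rw [T_of_lt h, T_of_gt h, Pi.neg_apply]
    · rw [T_self, Pi.zero_apply, neg_zero]
    · rw [T_of_lt h, T_of_gt h, Pi.neg_apply, neg_neg]
  · rcases huv.lt_or_gt with h | h
    · exact T_of_lt h ▸ (hθ u v huv).1
    · exact T_of_gt h ▸ D.arc_symm u v ▸ (hθ v u huv.symm).1.neg
  · rcases lt_trichotomy u v with h | rfl | h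
    · rw [T_of_lt h, (hθ u v h.ne).2.1]
    · rw [T_self, Pi.zero_apply]
    · rw [T_of_gt h, Pi.neg_apply, (hθ v u h.ne).2.1, neg_zero]
  · rcases huv.lt_or_gt with h | h
    · rw [T_of_lt h, (hθ u v huv).2.2 x hx hxq]
    · rw [T_of_gt h, Pi.neg_apply, Complex.exp_neg,
        (hθ v u huv.symm).2.2 x (D.arc_symm u v ▸ hx) hxq, inv_div]

variable (A : AngleSystem D φ) {a b c d : Fin n}

/-- `2πi` times the winding number of the triangle `abc` around `x`. -/
def winding (a b c : Fin n) (x : S) : ℂ := A.angle a b x + (A.angle b c x + A.angle c a x)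

theorem winding_rotate (a b c : Fin n) : A.winding b c a = A.winding a b c := by
  ext x
  simp only [winding]
  ring

theorem winding_swap (a b c : Fin n) (x : S) : A.winding b a c x = -A.winding a b c x := by
  simp only [winding, A.angle_symm a b, A.angle_symm c a, A.angle_symm b c]
  ring

theorem winding_cocycle (a b c d : Fin n) (x : S) :
    A.winding a b c x = A.winding a b d x + A.winding b c d x + A.winding c a d x := by
  simp only [winding, A.angle_symm d a, A.angle_symm d b, A.angle_symm d c]
  ring

theorem winding_base (a b c : Fin n) : A.winding a b c q = 0 := by
  simp only [winding, A.angle_base, add_zero]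

include A in
theorem base_notMem_tri (h : Distinct a b c) : q ∉ D.tri a b c := by
  rw [D.tri_eq_union]
  rintro (hq | hq | hq)
  exacts [A.base_notMem_arc _ _ h.ne₁₂ hq, A.base_notMem_arc _ _ h.ne₂₃ hq,
    A.base_notMem_arc _ _ h.ne₃₁ hq]

include A in
theorem vtx_ne_base (h : a ≠ b) : D.vtx a ≠ q :=
  ne_of_mem_of_not_mem (D.vtx_mem_arc_left h) (A.base_notMem_arc a b h)

include A in
theorem vtx_sub_ne_zero (h : a ≠ b) {x : S} (hx : x ∉ D.arc a b) (hxq : x ≠ q) :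
    φ (D.vtx a) - φ x ≠ 0 :=
  φ.sub_ne_zero (A.vtx_ne_base h) hxq (ne_of_mem_of_not_mem (D.vtx_mem_arc_left h) hx)

theorem exp_angle_path (h : Distinct a b c) {x : S} (hx : x ∉ D.arc b c ∪ D.arc c a)
    (hxq : x ≠ q) : Complex.exp (A.angle b c x + A.angle c a x) =
      (φ (D.vtx a) - φ x) / (φ (D.vtx b) - φ x) := by
  obtain ⟨hbc, hca⟩ := not_or.1 hx
  have := A.vtx_sub_ne_zero h.ne₂₃ hbc hxq
  have := A.vtx_sub_ne_zero h.ne₃₁ hca hxq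
  rw [Complex.exp_add, A.exp_angle _ _ h.ne₂₃ x hbc hxq, A.exp_angle _ _ h.ne₃₁ x hca hxq]
  field_simp

theorem continuousOn_angle_path (h : Distinct a b c) :
    ContinuousOn (fun x => A.angle b c x + A.angle c a x) (D.arc b c ∪ D.arc c a)ᶜ :=
  ((A.continuousOn_angle _ _ h.ne₂₃).mono (compl_subset_compl.2 subset_union_left)).add
    ((A.continuousOn_angle _ _ h.ne₃₁).mono (compl_subset_compl.2 subset_union_right))

theorem exp_winding (h : Distinct a b c) {x : S} (hx : x ∉ D.tri a b c) :
    Complex.exp (A.winding a b c x) = 1 := by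
  rcases eq_or_ne x q with rfl | hxq
  · rw [winding_base, Complex.exp_zero]
  rw [D.tri_eq_union, mem_union, not_or] at hx
  have := A.vtx_sub_ne_zero h.ne₁₂ hx.1 hxq
  have := A.vtx_sub_ne_zero h.ne₂₃ (fun hx' => hx.2 (Or.inl hx')) hxq
  rw [winding, Complex.exp_add, A.exp_angle _ _ h.ne₁₂ x hx.1 hxq, A.exp_angle_path h hx.2 hxq]
  field_simp

theorem continuousOn_winding (h : Distinct a b c) :
    ContinuousOn (A.winding a b c) (D.tri a b c)ᶜ := by
  rw [D.tri_eq_union, compl_union]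
  exact ((A.continuousOn_angle _ _ h.ne₁₂).mono inter_subset_left).add
    ((A.continuousOn_angle_path h).mono inter_subset_right)

theorem winding_eq_of_isPreconnected (h : Distinct a b c) {s : Set S} (hs : IsPreconnected s)
    (hdisj : s ⊆ (D.tri a b c)ᶜ) {x y : S} (hx : x ∈ s) (hy : y ∈ s) :
    A.winding a b c x = A.winding a b c y :=
  eq_of_exp_eq_one_of_isPreconnected hs ((A.continuousOn_winding h).mono hdisj)
    (fun _ hz => A.exp_winding h (hdisj hz)) hx hy

theorem winding_eq_of_mem_connectedComponentIn (h : Distinct a b c) {x y : S}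
    (hy : y ∈ connectedComponentIn (D.tri a b c)ᶜ x) : A.winding a b c y = A.winding a b c x := by
  have hx : x ∈ (D.tri a b c)ᶜ := connectedComponentIn_nonempty_iff.1 ⟨y, hy⟩
  exact A.winding_eq_of_isPreconnected h isPreconnected_connectedComponentIn
    (connectedComponentIn_subset _ _) hy (mem_connectedComponentIn hx)

/-! ### The two sides of a triangle -/

/-- The points off the triangle `abc` whose winding number lies in `w`. -/
def region (a b c : Fin n) (w : Set ℂ) : Set S := (D.tri a b c)ᶜ ∩ A.winding a b c ⁻¹' w

/-- The side of the triangle `abc` not containing the base point. -/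
def inside (a b c : Fin n) : Set S := A.region a b c {0}ᶜ

/-- The side of the triangle `abc` containing the base point. -/
def outside (a b c : Fin n) : Set S := A.region a b c {0}

theorem inside_rotate (a b c : Fin n) : A.inside b c a = A.inside a b c := by
  simp only [inside, region, D.tri_rotate, winding_rotate]

theorem inside_swap (a b c : Fin n) : A.inside b a c = A.inside a b c := by
  ext x
  simp only [inside, region, D.tri_swap a b c, mem_inter_iff, mem_preimage, winding_swap A a b,
    mem_compl_singleton_iff, ne_eq, neg_eq_zero]

theorem mem_tri_or_mem_inside_or_mem_outside (a b c : Fin n) (x : S) :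
    x ∈ D.tri a b c ∨ x ∈ A.inside a b c ∨ x ∈ A.outside a b c := by
  by_cases hx : x ∈ D.tri a b c
  · exact Or.inl hx
  · exact Or.inr ((ne_or_eq (A.winding a b c x) 0).imp (⟨hx, ·⟩) (⟨hx, ·⟩))

theorem notMem_outside {x : S} (hx : x ∈ A.inside a b c) : x ∉ A.outside a b c :=
  fun hx' => hx.2 hx'.2

theorem base_mem_outside (h : Distinct a b c) : q ∈ A.outside a b c :=
  ⟨A.base_notMem_tri h, A.winding_base a b c⟩

theorem base_notMem_inside : q ∉ A.inside a b c :=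
  fun hq => hq.2 (A.winding_base a b c)

theorem disjoint_region_tri {w : Set ℂ} : Disjoint (A.region a b c w) (D.tri a b c) :=
  disjoint_compl_left.mono_left inter_subset_left

theorem base_notMem_connectedComponentIn (h : Distinct a b c) {x : S} (hx : x ∈ A.inside a b c) :
    q ∉ connectedComponentIn (D.tri a b c)ᶜ x := fun hq =>
  hx.2 ((A.winding_eq_of_mem_connectedComponentIn h hq).symm.trans (A.winding_base a b c))

theorem ne_of_vtx_mem_inside (h : Distinct a b c) (hd : D.vtx d ∈ A.inside a b c) :
    d ≠ a ∧ d ≠ b ∧ d ≠ c := by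
  have hd' := hd.1
  refine ⟨?_, ?_, ?_⟩ <;> rintro rfl
  · exact hd' (Or.inl (Or.inl (D.vtx_mem_arc_left h.ne₁₂)))
  · exact hd' (Or.inl (Or.inl (D.vtx_mem_arc_right h.ne₁₂)))
  · exact hd' (Or.inl (Or.inr (D.vtx_mem_arc_right h.ne₂₃)))

section T2

variable [T2Space S]

/-- If the inside were empty, the winding number would vanish and the angle of `ab` would extend
across the arc `ab` by minus the angle of the path `bca`. -/
theorem inside_nonempty (h : Distinct a b c) : (A.inside a b c).Nonempty := by
  classical
  by_contra hempty
  have winding_eq_zero : ∀ x ∉ D.tri a b c, A.winding a b c x = 0 := fun x hx => by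
    by_contra hw
    exact hempty ⟨x, hx, hw⟩
  let L : S → ℂ := (D.arc a b).piecewise (fun x => -(A.angle b c x + A.angle c a x)) (A.angle a b)
  have L_eq_angle : EqOn L (A.angle a b) (D.arc a b)ᶜ := piecewise_eqOn_compl ..
  have L_eq_path : EqOn L (fun x => -(A.angle b c x + A.angle c a x))
      (D.arc b c ∪ D.arc c a)ᶜ := fun x hx => by
    by_cases hxab : x ∈ D.arc a b
    · exact piecewise_eq_of_mem _ _ _ hxab
    · rw [L_eq_angle hxab]
      exact eq_neg_of_add_eq_zero_left
        (winding_eq_zero x (D.tri_eq_union a b c ▸ not_or.2 ⟨hxab, hx⟩))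
  have continuousOn_L : ContinuousOn L {D.vtx a, D.vtx b}ᶜ := by
    rw [← D.arc_inter_path h, compl_inter]
    exact ((A.continuousOn_angle a b h.ne₁₂).congr L_eq_angle).union_of_isOpen
      ((A.continuousOn_angle_path h).neg.congr L_eq_path) (D.isClosed_arc h.ne₁₂).isOpen_compl
      (D.isClosed_path h).isOpen_compl
  have exp_L : ∀ x, x ≠ D.vtx a → x ≠ D.vtx b → x ≠ q →
      Complex.exp (L x) = (φ (D.vtx b) - φ x) / (φ (D.vtx a) - φ x) := fun x hxa hxb hxq => by
    by_cases hx : x ∈ D.arc a b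
    · have hx' := D.notMem_path h hx hxa hxb
      rw [L_eq_path hx', Complex.exp_neg, A.exp_angle_path h hx' hxq, inv_div]
    · rw [L_eq_angle hx, A.exp_angle a b h.ne₁₂ x hx hxq]
  have symm_ne : ∀ {u z}, z ≠ φ (D.vtx u) → φ.symm z ≠ D.vtx u := fun hz hu =>
    hz (hu ▸ (φ.apply_symm _).symm)
  have hab : φ (D.vtx a) ≠ φ (D.vtx b) := fun hab => h.ne₁₂ (D.vtx_inj
    (φ.injOn (A.vtx_ne_base h.ne₁₂) (A.vtx_ne_base h.ne₁₂.symm) hab))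
  refine not_forall_exp_eq_div hab (l := L ∘ φ.symm)
    (continuousOn_L.comp φ.continuous_symm.continuousOn fun z hz => ?_) fun z hza hzb => ?_
  · exact not_or.2 ((not_or.1 hz).imp symm_ne symm_ne)
  · rw [Function.comp_apply, exp_L _ (symm_ne hza) (symm_ne hzb) (φ.symm_ne z), φ.apply_symm]

variable [LocallyConnectedSpace S] {w : Set ℂ}

theorem isOpen_region (h : Distinct a b c) : IsOpen (A.region a b c w) := by
  refine isOpen_iff_mem_nhds.2 fun x hx => ?_
  filter_upwards [(D.isClosed_tri h).isOpen_compl.connectedComponentIn.mem_nhds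
    (mem_connectedComponentIn hx.1)] with y hy
  refine ⟨connectedComponentIn_subset _ _ hy, ?_⟩
  rw [mem_preimage, A.winding_eq_of_mem_connectedComponentIn h hy]
  exact hx.2

theorem frontier_region_subset (h : Distinct a b c) :
    frontier (A.region a b c w) ⊆ D.tri a b c := by
  intro x hx
  by_contra hxt
  have hxw : x ∈ A.region a b c wᶜ :=
    ⟨hxt, fun hw => (A.isOpen_region h).frontier_eq ▸ hx |>.2 ⟨hxt, hw⟩⟩
  have hdisj : Disjoint (A.region a b c w) (A.region a b c wᶜ) :=
    disjoint_left.2 fun y hy hy' => hy'.2 hy.2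
  exact disjoint_left.1 (hdisj.closure_left (A.isOpen_region h)) hx.1 hxw

end T2

end AngleSystem

theorem frontier_connectedComponentIn_subset {X : Type*} [TopologicalSpace X]
    [LocallyConnectedSpace X] {U : Set X} (hU : IsOpen U) (x : X) :
    frontier (connectedComponentIn U x) ⊆ Uᶜ := by
  intro y hy hyU
  obtain ⟨z, hzy, hzx⟩ := mem_closure_iff.1 hy.1 _ hU.connectedComponentIn
    (mem_connectedComponentIn hyU)
  refine hy.2 (hU.connectedComponentIn.interior_eq.symm ▸ ?_)
  rw [connectedComponentIn_eq hzx, ← connectedComponentIn_eq hzy]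
  exact mem_connectedComponentIn hyU

namespace AngleSystem

variable {n : ℕ} {S : Type*} [TopologicalSpace S] {D : GoodDrawing n S} {q : S}
  {φ : PuncturedChart S q} (A : AngleSystem D φ) {a b c d : Fin n}

section T2

variable [T2Space S] [LocallyConnectedSpace S]

/-- The angle of `ab` cancels in the difference, which therefore does not jump across `ab`. -/
theorem exists_isOpen_winding_sub_winding_eq (habc : Distinct a b c) (habd : Distinct a b d)
    {p : S} (hp : p ∈ D.arc a b) (hpa : p ≠ D.vtx a) (hpb : p ≠ D.vtx b) :
    ∃ N, IsOpen N ∧ p ∈ N ∧ Disjoint N (D.arc b c ∪ D.arc c a) ∧ ∀ x ∈ N, ∀ y ∈ N,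
      A.winding a b c x - A.winding a b d x = A.winding a b c y - A.winding a b d y := by
  set O := (D.arc b c ∪ D.arc c a)ᶜ ∩ (D.arc b d ∪ D.arc d a)ᶜ
  have hO : IsOpen O :=
    (D.isClosed_path habc).isOpen_compl.inter (D.isClosed_path habd).isOpen_compl
  have hpO : p ∈ O := ⟨D.notMem_path habc hp hpa hpb, D.notMem_path habd hp hpa hpb⟩
  have sub_O : connectedComponentIn O p ⊆ O := connectedComponentIn_subset _ _
  refine ⟨connectedComponentIn O p, hO.connectedComponentIn, mem_connectedComponentIn hpO,
    disjoint_left.2 fun x hx => (sub_O hx).1, fun x hx y hy => ?_⟩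
  have path_sub_eq := eq_of_exp_eq_one_of_isPreconnected isPreconnected_connectedComponentIn
    (((A.continuousOn_angle_path habc).mono (sub_O.trans inter_subset_left)).sub
      ((A.continuousOn_angle_path habd).mono (sub_O.trans inter_subset_right)))
    (fun z hz => ?_) hx hy
  · simpa only [winding, add_sub_add_left_eq_sub, Pi.sub_apply] using path_sub_eq
  · obtain ⟨hzc, hzd⟩ := sub_O hz
    rw [Pi.sub_apply]
    rcases eq_or_ne z q with rfl | hzq
    · simp only [A.angle_base, add_zero, sub_zero, Complex.exp_zero]
    · rw [Complex.exp_sub, A.exp_angle_path habc hzc hzq, A.exp_angle_path habd hzd hzq]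
      refine div_self (div_ne_zero ?_ ?_)
      · exact A.vtx_sub_ne_zero habc.ne₃₁.symm
          (fun hz => hzc (Or.inr (D.arc_symm a c ▸ hz))) hzq
      · exact A.vtx_sub_ne_zero habc.ne₂₃ (fun hz => hzc (Or.inl hz)) hzq

variable [CompactSpace S]

include A in
theorem mem_connectedComponentIn_of_base_notMem (h : Distinct a b c) {x y : S}
    (hx : x ∉ D.tri a b c) (hy : y ∉ D.tri a b c)
    (hqx : q ∉ connectedComponentIn (D.tri a b c)ᶜ x)
    (hqy : q ∉ connectedComponentIn (D.tri a b c)ᶜ y) :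
    y ∈ connectedComponentIn (D.tri a b c)ᶜ x := by
  have hopen : IsOpen (D.tri a b c)ᶜ := (D.isClosed_tri h).isOpen_compl
  have frontier_subset : ∀ z, frontier (connectedComponentIn (D.tri a b c)ᶜ z) ⊆
      D.arc a b ∪ (D.arc b c ∪ D.arc c a) := fun z =>
    D.tri_eq_union a b c ▸ (frontier_connectedComponentIn_subset hopen z).trans_eq (compl_compl _)
  have disjoint_tri : ∀ z, Disjoint (connectedComponentIn (D.tri a b c)ᶜ z)
      (D.arc a b ∪ (D.arc b c ∪ D.arc c a)) := fun z =>
    D.tri_eq_union a b c ▸ disjoint_compl_left.mono_left (connectedComponentIn_subset _ _)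
  by_contra hne
  have hdisj : Disjoint (connectedComponentIn (D.tri a b c)ᶜ x)
      (connectedComponentIn (D.tri a b c)ᶜ y) := by
    refine disjoint_left.2 fun z hzx hzy => hne ?_
    rw [connectedComponentIn_eq hzx, ← connectedComponentIn_eq hzy]
    exact mem_connectedComponentIn hy
  rcases φ.eq_empty_or_eq_empty_of_frontier_subset (D.isClosed_arc h.ne₁₂) (D.isClosed_path h)
    (D.isLogTrivial_arc h.ne₁₂) (D.isLogTrivial_path h) (D.arc_inter_path h)
    (D.tri_eq_union a b c ▸ A.base_notMem_tri h) hopen.connectedComponentIn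
    hopen.connectedComponentIn hdisj hqx hqy (frontier_subset x) (frontier_subset y)
    (disjoint_tri x) (disjoint_tri y) with he | he
  · exact eq_empty_iff_forall_notMem.1 he x (mem_connectedComponentIn hx)
  · exact eq_empty_iff_forall_notMem.1 he y (mem_connectedComponentIn hy)

theorem inside_eq_connectedComponentIn (h : Distinct a b c) {x : S} (hx : x ∈ A.inside a b c) :
    A.inside a b c = connectedComponentIn (D.tri a b c)ᶜ x := by
  refine Subset.antisymm (fun y hy => ?_) fun y hy => ⟨connectedComponentIn_subset _ _ hy, ?_⟩
  · exact A.mem_connectedComponentIn_of_base_notMem h hx.1 hy.1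
      (A.base_notMem_connectedComponentIn h hx) (A.base_notMem_connectedComponentIn h hy)
  · rw [mem_preimage, A.winding_eq_of_mem_connectedComponentIn h hy]
    exact hx.2

theorem outside_eq_connectedComponentIn (h : Distinct a b c) :
    A.outside a b c = connectedComponentIn (D.tri a b c)ᶜ q := by
  refine Subset.antisymm (fun y hy => ?_) fun y hy => ⟨connectedComponentIn_subset _ _ hy, ?_⟩
  · by_contra hne
    obtain ⟨x, hx⟩ := A.inside_nonempty h
    have hqy : q ∉ connectedComponentIn (D.tri a b c)ᶜ y := fun hq =>
      hne (connectedComponentIn_eq hq ▸ mem_connectedComponentIn hy.1)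
    have hyx := A.mem_connectedComponentIn_of_base_notMem h hx.1 hy.1
      (A.base_notMem_connectedComponentIn h hx) hqy
    rw [← A.inside_eq_connectedComponentIn h hx] at hyx
    exact A.notMem_outside hyx hy
  · exact (A.winding_eq_of_mem_connectedComponentIn h hy).trans (A.winding_base a b c)

theorem winding_eq_of_mem_inside (h : Distinct a b c) {x y : S} (hx : x ∈ A.inside a b c)
    (hy : y ∈ A.inside a b c) : A.winding a b c x = A.winding a b c y := by
  rw [A.inside_eq_connectedComponentIn h hx] at hy
  exact (A.winding_eq_of_mem_connectedComponentIn h hy).symm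

theorem arc_subset_closure_region (h : Distinct a b c) {w : Set ℂ}
    (hne : (A.region a b c w).Nonempty) (hne' : (A.region a b c wᶜ).Nonempty) :
    D.arc a b ⊆ closure (A.region a b c w) := by
  obtain ⟨f, hf, hinj, h₀, h₁, harc⟩ := D.isArc a b h.ne₁₂
  obtain ⟨y, hy⟩ := hne'
  have tri_eq : D.tri a b c = f '' Icc 0 1 ∪ (D.arc b c ∪ D.arc c a) :=
    harc ▸ D.tri_eq_union a b c
  rw [harc]
  refine φ.image_Icc_subset_closure hf hinj (D.isClosed_path h) (D.isLogTrivial_path h)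
    (by rw [← harc, h₀, h₁, D.arc_inter_path h]) (tri_eq ▸ A.base_notMem_tri h)
    (A.isOpen_region h) hne (tri_eq ▸ A.frontier_region_subset h)
    (tri_eq ▸ A.disjoint_region_tri) fun huniv => ?_
  rw [← tri_eq] at huniv
  exact (huniv ▸ mem_univ y : y ∈ A.region a b c w ∪ D.tri a b c).elim (fun hw => hy.2 hw.2) hy.1

theorem arc_subset_closure_inside (h : Distinct a b c) : D.arc a b ⊆ closure (A.inside a b c) :=
  A.arc_subset_closure_region h (A.inside_nonempty h)
    ((compl_compl ({0} : Set ℂ)).symm ▸ ⟨q, A.base_mem_outside h⟩)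

theorem arc_subset_closure_outside (h : Distinct a b c) : D.arc a b ⊆ closure (A.outside a b c) :=
  A.arc_subset_closure_region h ⟨q, A.base_mem_outside h⟩ (A.inside_nonempty h)

end T2

/-! ### Orientation of convex triangles -/

/-- The closed inner side of every triangle is convex. -/
def IsConvex : Prop :=
  ∀ a b c, Distinct a b c → D.ConvexDisc (A.inside a b c ∪ D.tri a b c)

variable {A}

theorem IsConvex.tri_subset (hA : A.IsConvex) (h : Distinct a b c)
    (hd : D.vtx d ∈ A.inside a b c) : D.tri a b d ⊆ A.inside a b c ∪ D.tri a b c := by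
  obtain ⟨hda, hdb, -⟩ := A.ne_of_vtx_mem_inside h hd
  have ha : D.vtx a ∈ D.tri a b c := Or.inl (Or.inl (D.vtx_mem_arc_left h.ne₁₂))
  have hb : D.vtx b ∈ D.tri a b c := Or.inl (Or.inl (D.vtx_mem_arc_right h.ne₁₂))
  refine union_subset (union_subset ?_ ?_) ?_
  · exact (subset_union_left.trans subset_union_left).trans subset_union_right
  · exact hA a b c h b d hdb.symm (Or.inr hb) (Or.inl hd)
  · exact hA a b c h a d hda.symm (Or.inr ha) (Or.inl hd)

variable [T2Space S] [LocallyConnectedSpace S] [CompactSpace S]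

theorem IsConvex.winding_eq_zero (hA : A.IsConvex) (h : Distinct a b c)
    (hd : D.vtx d ∈ A.inside a b c) {x : S} (hx : x ∈ A.outside a b c) :
    A.winding a b d x = 0 := by
  obtain ⟨hda, hdb, -⟩ := A.ne_of_vtx_mem_inside h hd
  have habd : Distinct a b d := ⟨h.ne₁₂, hdb.symm, hda⟩
  have hsub : A.outside a b c ⊆ (D.tri a b d)ᶜ := fun y hy hy' =>
    (hA.tri_subset h hd hy').elim (A.notMem_outside · hy) hy.1
  have hconn : IsPreconnected (A.outside a b c) :=
    A.outside_eq_connectedComponentIn h ▸ isPreconnected_connectedComponentIn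
  exact (A.winding_eq_of_isPreconnected habd hconn hsub hx (A.base_mem_outside h)).trans
    (A.winding_base a b d)

/-- Compare the two windings on both sides of the arc `ab`, near an inner point of it. -/
theorem IsConvex.exists_winding_eq (hA : A.IsConvex) (h : Distinct a b c)
    (hd : D.vtx d ∈ A.inside a b c) :
    ∃ z ∈ A.inside a b c, z ∈ A.inside a b d ∧ A.winding a b c z = A.winding a b d z := by
  obtain ⟨hda, hdb, -⟩ := A.ne_of_vtx_mem_inside h hd
  have habd : Distinct a b d := ⟨h.ne₁₂, hdb.symm, hda⟩
  obtain ⟨p, hp, hpa, hpb⟩ := D.exists_mem_arc_ne_vtx h.ne₁₂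
  obtain ⟨N, hN, hpN, hNpath, hNconst⟩ :=
    A.exists_isOpen_winding_sub_winding_eq h habd hp hpa hpb
  obtain ⟨y, hyN, hy⟩ := mem_closure_iff.1 (A.arc_subset_closure_outside h hp) N hN hpN
  obtain ⟨z, hzN, hz⟩ := mem_closure_iff.1 (A.arc_subset_closure_inside habd hp) N hN hpN
  have winding_eq : A.winding a b c z = A.winding a b d z := by
    have := hNconst z hzN y hyN
    rwa [hA.winding_eq_zero h hd hy, hy.2, sub_zero, sub_eq_zero] at this
  refine ⟨z, ⟨?_, ?_⟩, hz, winding_eq⟩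
  · rw [mem_compl_iff, D.tri_eq_union]
    exact not_or.2 ⟨fun hz' => hz.1 (Or.inl (Or.inl hz')), disjoint_left.1 hNpath hzN⟩
  · rw [mem_preimage, winding_eq]
    exact hz.2

end AngleSystem

namespace AngleSystem

section Pos

variable {n : ℕ} {S : Type*} [TopologicalSpace S] {D : GoodDrawing n S} {q : S}
  {φ : PuncturedChart S q} (A : AngleSystem D φ) {a b c d : Fin n}

/-- The triangle `abc` is traversed counterclockwise, as witnessed by its winding number around an
inner point. -/
def Pos (a b c : Fin n) : Prop :=
  Distinct a b c ∧ ∃ z ∈ A.inside a b c, 0 < (A.winding a b c z).im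

theorem im_winding_ne_zero (h : Distinct a b c) {z : S} (hz : z ∈ A.inside a b c) :
    (A.winding a b c z).im ≠ 0 := by
  obtain ⟨m, hm⟩ := Complex.exp_eq_one_iff.1 (A.exp_winding h hz.1)
  have hw : A.winding a b c z ≠ 0 := hz.2
  rw [hm] at hw ⊢
  simpa using left_ne_zero_of_mul hw

theorem exists_vtx_mem_inside (hd : D.vtx d ∈ A.inside a b c) {e : Fin n} (habe : Distinct a b e)
    (hbce : Distinct b c e) (hcae : Distinct c a e) (hde : d ≠ e) :
    D.vtx d ∈ A.inside a b e ∨ D.vtx d ∈ A.inside b c e ∨ D.vtx d ∈ A.inside c a e := by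
  obtain ⟨hda, hdb, hdc⟩ := A.ne_of_vtx_mem_inside ⟨habe.ne₁₂, hbce.ne₁₂, hcae.ne₁₂⟩ hd
  by_contra! hnot
  have winding_eq_zero : ∀ {u v}, Distinct u v e → d ≠ u → d ≠ v → D.vtx d ∉ A.inside u v e →
      A.winding u v e (D.vtx d) = 0 := fun h hdu hdv hin => by
    by_contra hw
    exact hin ⟨D.vtx_notMem_tri h hdu hdv hde, hw⟩
  refine hd.2 (mem_singleton_iff.2 ?_)
  rw [A.winding_cocycle a b c e, winding_eq_zero habe hda hdb hnot.1,
    winding_eq_zero hbce hdb hdc hnot.2.1, winding_eq_zero hcae hdc hda hnot.2.2]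
  ring

variable {A}

theorem Pos.rotate (h : A.Pos a b c) : A.Pos b c a := by
  obtain ⟨h, z, hz, hpos⟩ := h
  exact ⟨h.rotate, z, A.inside_rotate a b c ▸ hz, A.winding_rotate a b c ▸ hpos⟩

variable [T2Space S]

theorem pos_or_pos_swap (h : Distinct a b c) : A.Pos a b c ∨ A.Pos b a c := by
  obtain ⟨z, hz⟩ := A.inside_nonempty h
  refine (A.im_winding_ne_zero h hz).lt_or_gt.symm.imp (fun hpos => ⟨h, z, hz, hpos⟩) fun hneg =>
    ⟨h.swap, z, A.inside_swap a b c ▸ hz, ?_⟩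
  rwa [winding_swap, Complex.neg_im, neg_pos]

variable [LocallyConnectedSpace S] [CompactSpace S]

theorem Pos.im_winding_pos (h : A.Pos a b c) {z : S} (hz : z ∈ A.inside a b c) :
    0 < (A.winding a b c z).im := by
  obtain ⟨h, y, hy, hpos⟩ := h
  rwa [A.winding_eq_of_mem_inside h hz hy]

theorem Pos.im_winding_nonneg (h : A.Pos a b c) {z : S} (hz : z ∉ D.tri a b c) :
    0 ≤ (A.winding a b c z).im := by
  by_cases hw : A.winding a b c z = 0
  · rw [hw, Complex.zero_im]
  · exact (h.im_winding_pos ⟨hz, hw⟩).le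

theorem Pos.not_swap (h : A.Pos a b c) : ¬A.Pos b a c := fun h' => by
  obtain ⟨z, hz⟩ := A.inside_nonempty h.1
  have hneg := h'.im_winding_pos (A.inside_swap a b c ▸ hz)
  rw [winding_swap, Complex.neg_im] at hneg
  exact (neg_pos.1 hneg).not_gt (h.im_winding_pos hz)

theorem IsConvex.pos_of_vtx_mem_inside (hA : A.IsConvex) (h : A.Pos a b c)
    (hd : D.vtx d ∈ A.inside a b c) : A.Pos a b d := by
  obtain ⟨hda, hdb, -⟩ := A.ne_of_vtx_mem_inside h.1 hd
  obtain ⟨z, hzc, hzd, hz⟩ := hA.exists_winding_eq h.1 hd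
  exact ⟨⟨h.1.ne₁₂, hdb.symm, hda⟩, z, hzd, hz ▸ h.im_winding_pos hzc⟩

include A in
theorem dense_compl_arc (h : Distinct a b c) : Dense (D.arc a b)ᶜ := fun x => by
  by_cases hx : x ∈ D.arc a b
  · exact closure_mono (fun y hy hyab => hy.1 (Or.inl (Or.inl hyab)))
      (A.arc_subset_closure_inside h hx)
  · exact subset_closure hx

/-- If `d` were outside, the cocycle identity would have a vanishing left-hand side near `d` inside
`abd`, where none of the terms on its right-hand side is negative and the first one is positive. -/
theorem vtx_mem_inside (habd : A.Pos a b d) (hbcd : A.Pos b c d) (hcad : A.Pos c a d) :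
    D.vtx d ∈ A.inside a b c := by
  have habc : Distinct a b c := ⟨habd.1.ne₁₂, hbcd.1.ne₁₂, hcad.1.ne₁₂⟩
  by_contra hd
  have hdout : D.vtx d ∈ A.outside a b c :=
    ((A.mem_tri_or_mem_inside_or_mem_outside a b c _).resolve_left
      (D.vtx_notMem_tri habc habd.1.ne₃₁ hbcd.1.ne₃₁ hbcd.1.ne₂₃.symm)).resolve_left hd
  have hdcl : D.vtx d ∈ closure (A.inside a b d) :=
    A.inside_rotate a b d ▸ A.arc_subset_closure_inside habd.1.rotate
      (D.vtx_mem_arc_right habd.1.ne₂₃)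
  have hopen : IsOpen (A.outside a b c ∩ A.inside a b d) :=
    (A.isOpen_region habc).inter (A.isOpen_region habd.1)
  obtain ⟨y, ⟨hyout, hyin⟩, hycd⟩ := (A.dense_compl_arc hbcd.1.rotate).inter_open_nonempty _ hopen
    (mem_closure_iff.1 hdcl _ (A.isOpen_region habc) hdout)
  have hyabc : y ∉ D.tri a b c := hyout.1
  have hyabd : y ∉ D.tri a b d := hyin.1
  rw [D.tri_eq_union, mem_union, mem_union, not_or, not_or] at hyabc hyabd
  have hybcd : y ∉ D.tri b c d := by
    rw [D.tri_eq_union, D.arc_symm d b]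
    exact not_or.2 ⟨hyabc.2.1, not_or.2 ⟨hycd, hyabd.2.1⟩⟩
  have hycad : y ∉ D.tri c a d := by
    rw [D.tri_eq_union, D.arc_symm a d, D.arc_symm d c]
    exact not_or.2 ⟨hyabc.2.2, not_or.2 ⟨hyabd.2.2, hycd⟩⟩
  have cocycle := congrArg Complex.im (A.winding_cocycle a b c d y)
  rw [show A.winding a b c y = 0 from hyout.2] at cocycle
  simp only [Complex.add_im, Complex.zero_im] at cocycle
  linarith [habd.im_winding_pos hyin, hbcd.im_winding_nonneg hybcd, hcad.im_winding_nonneg hycad]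

theorem IsConvex.pos_iff_of_vtx_mem_inside (hA : A.IsConvex) (h : Distinct a b c)
    (hd : D.vtx d ∈ A.inside a b c) : A.Pos b c d ↔ A.Pos c a d := by
  rcases A.pos_or_pos_swap h with habc | hbac
  · have hd' : D.vtx d ∈ A.inside b c a := A.inside_rotate a b c ▸ hd
    exact iff_of_true (hA.pos_of_vtx_mem_inside habc.rotate hd')
      (hA.pos_of_vtx_mem_inside habc.rotate.rotate (A.inside_rotate b c a ▸ hd'))
  · have hd' : D.vtx d ∈ A.inside a c b := A.inside_rotate b a c ▸ A.inside_swap a b c ▸ hd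
    exact iff_of_false
      (hA.pos_of_vtx_mem_inside hbac.rotate.rotate (A.inside_rotate a c b ▸ hd')).not_swap
      (hA.pos_of_vtx_mem_inside hbac.rotate hd').not_swap

end Pos

end AngleSystem

/-! ### CC systems -/

/-- Knuth's CC systems, an axiomatisation of counterclockwise triples of points in general position.
The two mirror forms of transitivity are both part of the structure. -/
structure CCSystem (α : Type*) where
  Pos : α → α → α → Prop
  distinct : ∀ {a b c}, Pos a b c → Distinct a b c
  rotate : ∀ {a b c}, Pos a b c → Pos b c a
  not_swap : ∀ {a b c}, Pos a b c → ¬Pos b a c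
  total : ∀ {a b c}, Distinct a b c → Pos a b c ∨ Pos b a c
  interior : ∀ {a b c t}, Pos t a b → Pos t b c → Pos t c a → Pos a b c
  trans : ∀ {s t p q r}, Pos t s p → Pos t s q → Pos t s r → Pos t p q → Pos t q r → Pos t p r
  trans' : ∀ {s t p q r}, Pos t p s → Pos t q s → Pos t r s → Pos t p q → Pos t q r → Pos t p r

namespace CCSystem

variable {α : Type*} (O : CCSystem α)

/-- The point `t` lies in the counterclockwise triangle `abc`. -/
def Inside (t a b c : α) : Prop := O.Pos t a b ∧ O.Pos t b c ∧ O.Pos t c a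

/-- No point lies in the triangle `abc`, whichever its orientation. -/
def IsEmptyTriangle (a b c : α) : Prop := ∀ t, ¬O.Inside t a b c ∧ ¬O.Inside t b a c

/-- The vertex sets of the empty triangles. -/
def emptyTriples : Set (Finset α) :=
  {T | ∃ (a b c : α), Distinct a b c ∧ (T : Set α) = {a, b, c} ∧ O.IsEmptyTriangle a b c}

end CCSystem

namespace AngleSystem

variable {n : ℕ} {S : Type*} [TopologicalSpace S] {D : GoodDrawing n S} {q : S}
  {φ : PuncturedChart S q} {A : AngleSystem D φ}
  [T2Space S] [LocallyConnectedSpace S] [CompactSpace S] {a b c d : Fin n}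

/-- If transitivity failed, `t` would lie in the triangle `pqr`, hence in one of the triangles that
`s` forms with two of these points. -/
theorem Pos.trans_of_notMem_inside {p q r s t : Fin n} (hpq : A.Pos t p q) (hqr : A.Pos t q r)
    (hp : Distinct t s p) (hq : Distinct t s q) (hr : Distinct t s r)
    (hpqs : Distinct p q s → D.vtx t ∉ A.inside p q s)
    (hqrs : Distinct q r s → D.vtx t ∉ A.inside q r s)
    (hrps : Distinct r p s → D.vtx t ∉ A.inside r p s) : A.Pos t p r := by
  have hpr : p ≠ r := by
    rintro rfl
    exact hpq.not_swap hqr.rotate.rotate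
  refine (A.pos_or_pos_swap ⟨hp.ne₃₁.symm, hpr, hr.ne₃₁⟩).resolve_right fun hrp => ?_
  have ht : D.vtx t ∈ A.inside p q r := vtx_mem_inside hpq.rotate hqr.rotate hrp.rotate.rotate
  have hpqs' : Distinct p q s := ⟨hpq.1.ne₂₃, hq.ne₂₃.symm, hp.ne₂₃⟩
  have hqrs' : Distinct q r s := ⟨hqr.1.ne₂₃, hr.ne₂₃.symm, hq.ne₂₃⟩
  have hrps' : Distinct r p s := ⟨hpr.symm, hp.ne₂₃.symm, hr.ne₂₃⟩
  rcases A.exists_vtx_mem_inside ht hpqs' hqrs' hrps' hp.ne₁₂ with h | h | h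
  exacts [hpqs hpqs' h, hqrs hqrs' h, hrps hrps' h]

variable (hA : A.IsConvex)
include hA

theorem IsConvex.notMem_inside_of_pos {p q s t : Fin n} (h : Distinct p q s) (hp : A.Pos t s p)
    (hq : A.Pos t s q) : D.vtx t ∉ A.inside p q s := fun ht =>
  ((hA.pos_iff_of_vtx_mem_inside h ht).2 hp.rotate).not_swap hq.rotate

theorem IsConvex.notMem_inside_of_pos' {p q s t : Fin n} (h : Distinct p q s) (hp : A.Pos t p s)
    (hq : A.Pos t q s) : D.vtx t ∉ A.inside p q s := fun ht =>
  ((hA.pos_iff_of_vtx_mem_inside h ht).1 hq.rotate).not_swap hp.rotate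

/-- The orientations of the triangles of a drawing with convex inner sides form a CC system. -/
def IsConvex.ccSystem : CCSystem (Fin n) where
  Pos := A.Pos
  distinct h := h.1
  rotate h := h.rotate
  not_swap h := h.not_swap
  total h := A.pos_or_pos_swap h
  interior hab hbc hca := by
    have ht := vtx_mem_inside hab.rotate hbc.rotate hca.rotate
    refine (A.pos_or_pos_swap ⟨hab.1.ne₂₃, hbc.1.ne₂₃, hca.1.ne₂₃⟩).resolve_right fun hba => ?_
    exact hab.rotate.not_swap (hA.pos_of_vtx_mem_inside hba (A.inside_swap _ _ _ ▸ ht))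
  trans hp hq hr hpq hqr := hpq.trans_of_notMem_inside hqr hp.1 hq.1 hr.1
    (hA.notMem_inside_of_pos · hp hq) (hA.notMem_inside_of_pos · hq hr)
    (hA.notMem_inside_of_pos · hr hp)
  trans' hp hq hr hpq hqr := hpq.trans_of_notMem_inside hqr hp.1.swap.rotate
    hq.1.swap.rotate hr.1.swap.rotate (hA.notMem_inside_of_pos' · hp hq)
    (hA.notMem_inside_of_pos' · hq hr) (hA.notMem_inside_of_pos' · hr hp)

theorem IsConvex.vtx_notMem_inside (h : Distinct a b c)
    (hempty : hA.ccSystem.IsEmptyTriangle a b c) : D.vtx d ∉ A.inside a b c := fun hd => by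
  have inside_of_pos : ∀ {u v w}, A.Pos u v w → D.vtx d ∈ A.inside u v w →
      hA.ccSystem.Inside d u v w := fun {u v w} hpos hd => by
    have hd' := A.inside_rotate u v w ▸ hd
    have hd'' := A.inside_rotate v w u ▸ hd'
    exact ⟨(hA.pos_of_vtx_mem_inside hpos hd).rotate.rotate,
      (hA.pos_of_vtx_mem_inside hpos.rotate hd').rotate.rotate,
      (hA.pos_of_vtx_mem_inside hpos.rotate.rotate hd'').rotate.rotate⟩
  rcases A.pos_or_pos_swap h with hpos | hpos
  · exact (hempty d).1 (inside_of_pos hpos hd)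
  · exact (hempty d).2 (inside_of_pos hpos (A.inside_swap a b c ▸ hd))

omit hA

theorem isOpenSide_inside (h : Distinct a b c) : IsOpenSide (D.tri a b c) (A.inside a b c) := by
  obtain ⟨z, hz⟩ := A.inside_nonempty h
  exact ⟨z, hz.1, A.inside_eq_connectedComponentIn h hz⟩

theorem eq_inside_or_eq_outside (h : Distinct a b c) {U : Set S}
    (hU : IsOpenSide (D.tri a b c) U) : U = A.inside a b c ∨ U = A.outside a b c := by
  obtain ⟨p, hp, rfl⟩ := hU
  refine ((A.mem_tri_or_mem_inside_or_mem_outside a b c p).resolve_left hp).imp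
    (fun hin => (A.inside_eq_connectedComponentIn h hin).symm) fun hout => ?_
  rw [A.outside_eq_connectedComponentIn h] at hout ⊢
  exact (connectedComponentIn_eq hout).symm

include A in
theorem finite_emptyTriangles : D.emptyTriangles.Finite := by
  refine (finite_iUnion fun t : Fin n × Fin n × Fin n => toFinite
    {(({t.1, t.2.1, t.2.2} : Finset (Fin n)), A.inside t.1 t.2.1 t.2.2),
      ({t.1, t.2.1, t.2.2}, A.outside t.1 t.2.1 t.2.2)}).subset ?_
  rintro ⟨T, U⟩ ⟨a, b, c, hab, hac, hbc, rfl, hU, -⟩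
  refine mem_iUnion.2 ⟨(a, b, c), ?_⟩
  exact (A.eq_inside_or_eq_outside ⟨hab, hbc, hac.symm⟩ hU).imp (congrArg _) (congrArg _)

theorem IsConvex.ncard_emptyTriples_le (hA : A.IsConvex) :
    hA.ccSystem.emptyTriples.ncard ≤ D.emptyTriangles.ncard := by
  have hfin : D.emptyTriangles.Finite := A.finite_emptyTriangles
  refine (ncard_le_ncard ?_ (hfin.image Prod.fst)).trans (ncard_image_le hfin)
  rintro T ⟨a, b, c, h, hT, hempty⟩
  have hT' : T = {a, b, c} := Finset.coe_injective (by simpa using hT)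
  exact ⟨(T, A.inside a b c), ⟨a, b, c, h.ne₁₂, h.ne₃₁.symm, h.ne₂₃, hT',
    A.isOpenSide_inside h, fun _ => hA.vtx_notMem_inside h hempty⟩, rfl⟩

theorem isConvex_of_faceConvex {F : Set S} (hF : D.FaceConvex F) (hq : q ∈ F) : A.IsConvex := by
  refine fun a b c h => hF.2 a b c h.ne₁₂ h.ne₃₁.symm h.ne₂₃ _ ?_ fun hsub => ?_
  · obtain ⟨z, hz, heq⟩ := A.isOpenSide_inside h
    exact ⟨z, hz, heq ▸ rfl⟩
  · exact (hsub hq).elim A.base_notMem_inside (A.base_notMem_tri h)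

end AngleSystem

/-! ### The sphere -/

instance : Fact (Module.finrank ℝ (EuclideanSpace ℝ (Fin 3)) = 2 + 1) := ⟨by simp⟩

/-- Stereographic projection. -/
def spherePuncturedChart (q : SpherePt) : PuncturedChart SpherePt q where
  toOpenPartialHomeomorph := (stereographic' 2 q).transHomeomorph
    Complex.orthonormalBasisOneI.repr.symm.toHomeomorph
  source_eq := stereographic'_source q
  target_eq := by simp [stereographic'_target]

theorem GoodDrawing.FaceConvex.exists_ccSystem {n : ℕ} {D : GoodDrawing n SpherePt}
    {F : Set SpherePt} (hF : D.FaceConvex F) :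
    ∃ O : CCSystem (Fin n), O.emptyTriples.ncard ≤ D.emptyTriangles.ncard := by
  have : LocallyConnectedSpace SpherePt :=
    ChartedSpace.locallyConnectedSpace (EuclideanSpace ℝ (Fin 2)) _
  obtain ⟨q, hq, hFq⟩ := hF.1
  have notMem_arc : ∀ u v, u ≠ v → q ∉ D.arc u v := fun u v huv hquv =>
    hq (Or.inr (mem_iUnion₂.2 ⟨u, mem_univ u, mem_iUnion₂.2 ⟨v, mem_univ v,
      mem_iUnion.2 ⟨huv, hquv⟩⟩⟩))
  obtain ⟨A⟩ := AngleSystem.nonempty (φ := spherePuncturedChart q) notMem_arc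
  have hA : A.IsConvex := A.isConvex_of_faceConvex hF (hFq ▸ mem_connectedComponentIn hq)
  exact ⟨hA.ccSystem, hA.ncard_emptyTriples_le⟩

/-! ### Extreme points of CC systems -/

namespace CCSystem

variable {α : Type*} {O : CCSystem α} {A : Set α} {a b c m q t v x : α}

theorem Pos.asymm (h : O.Pos v a b) : ¬O.Pos v b a := fun h' =>
  O.not_swap h' (O.rotate (O.rotate h))

variable (O) in
theorem pos_or_pos (h : Distinct v a b) : O.Pos v a b ∨ O.Pos v b a :=
  (O.total h).imp_right O.rotate

theorem Inside.rotate (h : O.Inside t a b c) : O.Inside t b c a := ⟨h.2.1, h.2.2, h.1⟩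

theorem Inside.exists_pivot (h : O.Inside x a b c) (ha : a ∈ A) (hb : b ∈ A) (hc : c ∈ A)
    (hv : x ≠ v) : ∃ p ∈ A, ∃ q ∈ A, O.Inside x v p q := by
  rcases eq_or_ne v a with rfl | hva
  · exact ⟨b, hb, c, hc, h⟩
  rcases eq_or_ne v b with rfl | hvb
  · exact ⟨c, hc, a, ha, h.rotate⟩
  rcases eq_or_ne v c with rfl | hvc
  · exact ⟨a, ha, b, hb, h.rotate.rotate⟩
  obtain ⟨hab, hbc, hca⟩ := h
  rcases O.pos_or_pos ⟨hv, hva, (O.distinct hab).ne₁₂.symm⟩ with hpa | hpa <;>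
    rcases O.pos_or_pos ⟨hv, hvb, (O.distinct hbc).ne₁₂.symm⟩ with hpb | hpb <;>
      rcases O.pos_or_pos ⟨hv, hvc, (O.distinct hca).ne₁₂.symm⟩ with hpc | hpc
  · exact (hca.asymm (O.trans hpa hpb hpc hab hbc)).elim
  · exact ⟨b, hb, c, hc, hpb, hbc, hpc⟩
  · exact ⟨a, ha, b, hb, hpa, hab, hpb⟩
  · exact ⟨a, ha, b, hb, hpa, hab, hpb⟩
  · exact ⟨c, hc, a, ha, hpc, hca, hpa⟩
  · exact ⟨b, hb, c, hc, hpb, hbc, hpc⟩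
  · exact ⟨c, hc, a, ha, hpc, hca, hpa⟩
  · exact (hca.asymm (O.trans' hpa hpb hpc hab hbc)).elim

variable (O) in
/-- The point `v` is outside the convex hull of `A`. -/
def IsOutside (v : α) (A : Set α) : Prop :=
  v ∉ A ∧ ∀ a ∈ A, ∀ b ∈ A, ∀ c ∈ A, ¬O.Inside v a b c

theorem IsOutside.pos_trans (h : O.IsOutside v A) (ha : a ∈ A) (hb : b ∈ A) (hc : c ∈ A)
    (hab : O.Pos v a b) (hbc : O.Pos v b c) : O.Pos v a c := by
  have hac : a ≠ c := by
    rintro rfl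
    exact hab.asymm hbc
  refine (O.pos_or_pos ⟨(O.distinct hab).ne₁₂, hac, (O.distinct hbc).ne₃₁⟩).resolve_right ?_
  exact fun hca => h.2 a ha b hb c hc ⟨hab, hbc, hca⟩

theorem IsOutside.pos_or_pos (h : O.IsOutside v A) (ha : a ∈ A) (hb : b ∈ A) (hab : a ≠ b) :
    O.Pos v a b ∨ O.Pos v b a :=
  O.pos_or_pos ⟨fun hv => h.1 (hv ▸ ha), hab, fun hv => h.1 (hv ▸ hb)⟩

theorem IsOutside.mono {B : Set α} (h : O.IsOutside v A) (hBA : B ⊆ A) : O.IsOutside v B :=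
  ⟨fun hv => h.1 (hBA hv), fun a ha b hb c hc => h.2 a (hBA ha) b (hBA hb) c (hBA hc)⟩

open Classical in
/-- The counterclockwise order around `v` on the points of `A`. -/
abbrev IsOutside.linearOrder (h : O.IsOutside v A) : LinearOrder A :=
  have : IsStrictTotalOrder A (O.Pos v · ·) :=
    { irrefl := fun _ ha => ha.asymm ha
      trans := fun a b c => h.pos_trans a.2 b.2 c.2
      trichotomous := fun a b hab hba => by
        by_contra hne
        exact (h.pos_or_pos a.2 b.2 (Subtype.coe_ne_coe.2 hne)).elim hab hba }
  linearOrderOfSTO (O.Pos v · ·)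

theorem IsOutside.exists_first (h : O.IsOutside v A) (hfin : A.Finite) (hne : A.Nonempty) :
    ∃ m ∈ A, ∀ y ∈ A, y ≠ m → O.Pos v m y := by
  let := h.linearOrder
  have := hfin.to_subtype
  have := hne.to_subtype
  obtain ⟨m, hm⟩ := Finite.exists_min (id : A → A)
  exact ⟨m, m.2, fun y hy hym => (hm ⟨y, hy⟩).lt_of_ne fun h => hym (congrArg Subtype.val h).symm⟩

theorem IsOutside.exists_last (h : O.IsOutside v A) (hfin : A.Finite) (hne : A.Nonempty) :
    ∃ m ∈ A, ∀ y ∈ A, y ≠ m → O.Pos v y m := by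
  let := h.linearOrder
  have := hfin.to_subtype
  have := hne.to_subtype
  obtain ⟨m, hm⟩ := Finite.exists_max (id : A → A)
  exact ⟨m, m.2, fun y hy hym => (hm ⟨y, hy⟩).lt_of_ne fun h => hym (congrArg Subtype.val h)⟩

variable (O) in
/-- All points of `A` are on the left of the line from `v` to `m`. -/
structure HullEdge (A : Set α) (v m : α) : Prop where
  left_mem : v ∈ A
  right_mem : m ∈ A
  ne : v ≠ m
  pos : ∀ y ∈ A, y ≠ v → y ≠ m → O.Pos v m y

theorem HullEdge.isOutside (h : O.HullEdge A v m) (hx : x ∉ A) (hpos : O.Pos v x m) :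
    O.IsOutside x A := by
  refine ⟨hx, fun a ha b hb c hc hin => ?_⟩
  obtain ⟨p, hp, q, hq, hvp, hpq, hqv⟩ := hin.exists_pivot ha hb hc (O.distinct hpos).ne₁₂.symm
  have hvpq : O.Pos v p q := O.interior hvp hpq hqv
  have hvpx : O.Pos v p x := O.rotate hvp
  have hvxq : O.Pos v x q := O.rotate (O.rotate hqv)
  have hpm : p ≠ m := by
    rintro rfl
    exact hpos.asymm hvpx
  have hmp : O.Pos v m p := h.pos p hp (O.distinct hvpq).ne₁₂.symm hpm
  have hqm : q ≠ m := by
    rintro rfl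
    exact hmp.asymm hvpq
  have hmq : O.Pos v m q := h.pos q hq (O.distinct hvpq).ne₃₁ hqm
  exact hmp.asymm (O.trans' hvpq hvxq hmq hvpx hpos)

variable (O) in
theorem exists_hullEdge (hfin : A.Finite) (hA : A.Nontrivial) : ∃ v m, O.HullEdge A v m := by
  induction A, hfin using Set.Finite.induction_on with
  | empty => exact (not_nontrivial_empty hA).elim
  | @insert x A hx hfin ih =>
    by_cases hout : O.IsOutside x A
    · obtain ⟨y, hy, hyx⟩ := hA.exists_ne x
      obtain ⟨m, hm, hfirst⟩ := hout.exists_first hfin ⟨y, hy.resolve_left hyx⟩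
      refine ⟨x, m, mem_insert x A, mem_insert_of_mem x hm, fun hxm => hx (hxm ▸ hm), ?_⟩
      exact fun y hy hyx => hfirst y (hy.resolve_left hyx)
    · have hA' : A.Nontrivial := by
        by_contra hsub
        refine hout ⟨hx, fun a ha b hb c _ hin => (O.distinct hin.1).ne₂₃ ?_⟩
        exact not_nontrivial_iff.1 hsub ha hb
      obtain ⟨v, m, h⟩ := ih hA'
      refine ⟨v, m, mem_insert_of_mem x h.left_mem, mem_insert_of_mem x h.right_mem, h.ne, ?_⟩
      rintro y (rfl | hy) hyv hym
      · exact (O.pos_or_pos ⟨hyv.symm, hym, h.ne.symm⟩).resolve_left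
          fun hpos => hout (h.isOutside hx hpos)
      · exact h.pos y hy hyv hym

variable (O) in
theorem exists_isOutside_compl_singleton [Finite α] [Nontrivial α] :
    ∃ v, O.IsOutside v {v}ᶜ := by
  obtain ⟨v, m, h⟩ := O.exists_hullEdge finite_univ nontrivial_univ
  refine ⟨v, fun hv => hv rfl, fun a ha b hb c hc hin => ?_⟩
  obtain ⟨p, -, q, -, -, -, hqm⟩ := hin.exists_pivot ha hb hc h.ne
  obtain ⟨hvq, hqm_ne, -⟩ := O.distinct hqm
  exact hqm.asymm (h.pos q (mem_univ q) hvq.symm hqm_ne)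

end CCSystem

/-! ### Sorted CC systems -/

namespace CCSystem

variable {α : Type*}

/-- The CC system on the points of `A`. -/
def restrict (O : CCSystem α) (A : Set α) : CCSystem A where
  Pos a b c := O.Pos a b c
  distinct h := by
    obtain ⟨hab, hbc, hca⟩ := O.distinct h
    exact ⟨ne_of_apply_ne _ hab, ne_of_apply_ne _ hbc, ne_of_apply_ne _ hca⟩
  rotate := O.rotate
  not_swap := O.not_swap
  total h := O.total ⟨Subtype.coe_ne_coe.2 h.ne₁₂, Subtype.coe_ne_coe.2 h.ne₂₃,
    Subtype.coe_ne_coe.2 h.ne₃₁⟩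
  interior := O.interior
  trans := O.trans
  trans' := O.trans'

theorem IsOutside.ncard_emptyTriples_restrict_le [Finite α] {O : CCSystem α} {v : α}
    (h : O.IsOutside v {v}ᶜ) : (O.restrict {v}ᶜ).emptyTriples.ncard ≤ O.emptyTriples.ncard := by
  refine ncard_le_ncard_of_injOn (Finset.map (Function.Embedding.subtype _)) ?_
    (Finset.map_injective _).injOn (toFinite _)
  rintro T ⟨a, b, c, hd, hT, hempty⟩
  refine ⟨a, b, c, ⟨Subtype.coe_ne_coe.2 hd.ne₁₂, Subtype.coe_ne_coe.2 hd.ne₂₃,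
    Subtype.coe_ne_coe.2 hd.ne₃₁⟩, by simp [hT, image_insert_eq], fun t => ?_⟩
  rcases eq_or_ne t v with rfl | htv
  · exact ⟨h.2 a a.2 b b.2 c c.2, h.2 b b.2 a a.2 c c.2⟩
  · exact hempty ⟨t, htv⟩

theorem IsEmptyTriangle.reverse {O : CCSystem α} {a b c : α} (h : O.IsEmptyTriangle a b c) :
    O.IsEmptyTriangle c b a := fun t =>
  ⟨fun hin => (h t).2 hin.rotate, fun hin => (h t).1 hin.rotate.rotate⟩

variable [LinearOrder α] {O : CCSystem α} {r r' t x x' y y' : α}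

variable (O) in
/-- Every point is outside the convex hull of its predecessors and of its successors, as when a
point set is ordered by angle around an extreme point. -/
def IsSorted : Prop := ∀ x, O.IsOutside x (Iio x) ∧ O.IsOutside x (Ioi x)

variable (O) in
/-- The points `t` between `x` and `y` such that `x`, `t`, `y` are in counterclockwise order. -/
def rightOf (x y : α) : Set α := {t ∈ uIoo x y | O.Pos x t y}

variable (O) in
/-- All points between `x` and `y` are on the right of the line from `x` to `y`, and among them `r`
is closest to this line in angle, both as seen from `x` and as seen from `y`. -/
structure IsApex (x y r : α) : Prop where
  mem : r ∈ uIoo x y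
  pos : ∀ t ∈ uIoo x y, O.Pos x t y
  pos_left : ∀ t ∈ uIoo x y, t ≠ r → O.Pos x t r
  pos_right : ∀ t ∈ uIoo x y, t ≠ r → O.Pos y r t

theorem IsApex.unique_left (h : O.IsApex x y r) (h' : O.IsApex x y' r') (hy : y ∈ uIoo x y')
    (hr' : r' ∈ uIoo x y) : False := by
  rcases eq_or_ne r r' with rfl | hne
  · exact (h.pos r hr').asymm (h'.pos_left y hy (O.distinct (h.pos r hr')).ne₂₃.symm)
  · have hr : r ∈ uIoo x y' := by grind [uIoo, h.mem]
    exact (h.pos_left r' hr' hne.symm).asymm (h'.pos_left r hr hne)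

theorem IsApex.unique_right (h : O.IsApex x y r) (h' : O.IsApex x' y r') (hx : x ∈ uIoo x' y)
    (hr' : r' ∈ uIoo x y) : False := by
  rcases eq_or_ne r r' with rfl | hne
  · have hpos := h.pos r hr'
    exact (O.rotate (O.rotate hpos)).asymm (h'.pos_right x hx (O.distinct hpos).ne₁₂)
  · have hr : r ∈ uIoo x' y := by grind [uIoo, h.mem]
    exact (h.pos_right r' hr' hne.symm).asymm (h'.pos_right r hr hne)

variable (O) in
/-- The points between `x` and `y` that form an empty triangle with `x` and `y`. -/
def emptyMiddles (x y : α) : Set α := {r ∈ uIoo x y | O.IsEmptyTriangle x r y}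

theorem emptyMiddles_comm : O.emptyMiddles x y = O.emptyMiddles y x := by
  ext r
  simp only [emptyMiddles, mem_sep_iff, uIoo_comm x y]
  exact and_congr_right fun _ => ⟨IsEmptyTriangle.reverse, IsEmptyTriangle.reverse⟩

theorem rightOf_nonempty_or (h : (uIoo x y).Nonempty) :
    (O.rightOf x y).Nonempty ∨ (O.rightOf y x).Nonempty := by
  obtain ⟨t, ht⟩ := h
  have hd : Distinct x t y := by constructor <;> grind [uIoo]
  exact (O.total hd).imp (fun hpos => ⟨t, ht, hpos⟩)
    fun hpos => ⟨t, uIoo_comm x y ▸ ht, O.rotate (O.rotate hpos)⟩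

theorem disjoint_rightOf : Disjoint (O.rightOf x y) (O.rightOf y x) :=
  disjoint_left.2 fun _ h h' => h.2.asymm (O.rotate (O.rotate h'.2))

namespace IsSorted

variable (hO : O.IsSorted)
include hO

theorem isOutside_left : O.IsOutside x (uIoo x y) := by
  rcases le_total x y with h | h
  · exact (hO x).2.mono (uIoo_of_le h ▸ Ioo_subset_Ioi_self)
  · exact (hO x).1.mono (uIoo_of_ge h ▸ Ioo_subset_Iio_self)

theorem isOutside_right : O.IsOutside y (uIoo x y) := uIoo_comm y x ▸ hO.isOutside_left

theorem mem_uIoo_of_inside (hr : r ∈ uIoo x y) (ht : O.Inside t x r y) : t ∈ uIoo x y := by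
  by_contra hnot
  have htx := (O.distinct ht.1).ne₁₂
  have hty := (O.distinct ht.2.1).ne₃₁
  have hcases : (x ∈ Iio t ∧ r ∈ Iio t ∧ y ∈ Iio t) ∨ (x ∈ Ioi t ∧ r ∈ Ioi t ∧ y ∈ Ioi t) := by
    grind [uIoo]
  rcases hcases with ⟨hx, hr, hy⟩ | ⟨hx, hr, hy⟩
  · exact (hO t).1.2 x hx r hr y hy ht
  · exact (hO t).2.2 x hx r hr y hy ht

theorem mem_emptyMiddles_of_mem_rightOf (hr : r ∈ O.rightOf x y)
    (hlast : ∀ t ∈ O.rightOf x y, t ≠ r → O.Pos x t r ∨ O.Pos y r t) :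
    r ∈ O.emptyMiddles x y := by
  refine ⟨hr.1, fun t => ⟨fun ht => ?_, fun ht => O.not_swap hr.2 (O.interior ht.1 ht.2.1 ht.2.2)⟩⟩
  obtain ⟨hxr, hry, hyx⟩ := ht
  have hmem : t ∈ O.rightOf x y :=
    ⟨hO.mem_uIoo_of_inside hr.1 ⟨hxr, hry, hyx⟩, O.rotate (O.rotate hyx)⟩
  rcases hlast t hmem (O.distinct hxr).ne₃₁.symm with h | h
  · exact h.asymm (O.rotate hxr)
  · exact h.asymm (O.rotate (O.rotate hry))

variable [Finite α]

theorem exists_last_rightOf (h : (O.rightOf x y).Nonempty) :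
    ∃ r ∈ O.rightOf x y, ∀ t ∈ O.rightOf x y, t ≠ r → O.Pos x t r :=
  (hO.isOutside_left.mono (sep_subset _ _)).exists_last (toFinite _) h

theorem exists_first_rightOf (h : (O.rightOf x y).Nonempty) :
    ∃ r ∈ O.rightOf x y, ∀ t ∈ O.rightOf x y, t ≠ r → O.Pos y r t :=
  (hO.isOutside_right.mono (sep_subset _ _)).exists_first (toFinite _) h

theorem exists_mem_rightOf_mem_emptyMiddles (h : (O.rightOf x y).Nonempty) :
    ∃ r ∈ O.rightOf x y, r ∈ O.emptyMiddles x y :=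
  let ⟨r, hr, hlast⟩ := hO.exists_last_rightOf h
  ⟨r, hr, hO.mem_emptyMiddles_of_mem_rightOf hr fun t ht htr => Or.inl (hlast t ht htr)⟩

theorem emptyMiddles_nonempty (h : (uIoo x y).Nonempty) : (O.emptyMiddles x y).Nonempty := by
  rcases rightOf_nonempty_or (O := O) h with h | h
  · obtain ⟨r, -, hr⟩ := hO.exists_mem_rightOf_mem_emptyMiddles h
    exact ⟨r, hr⟩
  · obtain ⟨r, -, hr⟩ := hO.exists_mem_rightOf_mem_emptyMiddles h
    exact ⟨r, emptyMiddles_comm (O := O) ▸ hr⟩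

theorem emptyMiddles_nontrivial_or_isApex (h : (uIoo x y).Nonempty)
    (hpos : ∀ t ∈ uIoo x y, O.Pos x t y) :
    (O.emptyMiddles x y).Nontrivial ∨ ∃ r, O.IsApex x y r := by
  have hright : (O.rightOf x y).Nonempty := h.imp fun t ht => ⟨ht, hpos t ht⟩
  obtain ⟨r, hr, hlast⟩ := hO.exists_last_rightOf hright
  obtain ⟨r', hr', hfirst⟩ := hO.exists_first_rightOf hright
  rcases eq_or_ne r r' with rfl | hne
  · exact Or.inr ⟨r, hr.1, hpos, fun t ht => hlast t ⟨ht, hpos t ht⟩,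
      fun t ht => hfirst t ⟨ht, hpos t ht⟩⟩
  · exact Or.inl ⟨r, hO.mem_emptyMiddles_of_mem_rightOf hr fun t ht htr => Or.inl (hlast t ht htr),
      r', hO.mem_emptyMiddles_of_mem_rightOf hr' fun t ht htr => Or.inr (hfirst t ht htr), hne⟩

theorem emptyMiddles_nontrivial_or_exists_isApex (h : (uIoo x y).Nonempty) :
    (O.emptyMiddles x y).Nontrivial ∨ (∃ r, O.IsApex x y r) ∨ ∃ r, O.IsApex y x r := by
  have pos_of_rightOf_eq_empty : ∀ {x y}, O.rightOf x y = ∅ → ∀ t ∈ uIoo y x, O.Pos y t x := by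
    intro x y hempty t ht
    have hd : Distinct y t x := by constructor <;> grind [uIoo]
    exact (O.total hd).resolve_right fun hpos =>
      eq_empty_iff_forall_notMem.1 hempty t ⟨uIoo_comm x y ▸ ht, O.rotate (O.rotate hpos)⟩
  rcases (O.rightOf y x).eq_empty_or_nonempty with hyx | hyx
  · exact (hO.emptyMiddles_nontrivial_or_isApex h (pos_of_rightOf_eq_empty hyx)).imp_right Or.inl
  rcases (O.rightOf x y).eq_empty_or_nonempty with hxy | hxy
  · rw [uIoo_comm] at h
    rw [emptyMiddles_comm]
    exact (hO.emptyMiddles_nontrivial_or_isApex h (pos_of_rightOf_eq_empty hxy)).imp_right Or.inr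
  obtain ⟨r, hr, hrm⟩ := hO.exists_mem_rightOf_mem_emptyMiddles hxy
  obtain ⟨r', hr', hrm'⟩ := hO.exists_mem_rightOf_mem_emptyMiddles hyx
  exact Or.inl ⟨r, hrm, r', emptyMiddles_comm (O := O) ▸ hrm', disjoint_rightOf.ne_of_mem hr hr'⟩

end IsSorted

theorem IsOutside.isSorted_restrict {α : Type*} {O : CCSystem α} {v : α} (h : O.IsOutside v {v}ᶜ) :
    let := h.linearOrder
    (O.restrict {v}ᶜ).IsSorted := by
  intro _ x
  refine ⟨⟨lt_irrefl x, fun a ha b hb c hc hin => ?_⟩, ⟨lt_irrefl x, fun a ha b hb c hc hin => ?_⟩⟩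
  all_goals
    obtain ⟨p, hp, q, hq, hvp, -, hqv⟩ := Inside.exists_pivot (O := O) (A := Subtype.val '' _) hin
      (mem_image_of_mem _ ha) (mem_image_of_mem _ hb) (mem_image_of_mem _ hc) x.2
    obtain ⟨p, hp, rfl⟩ := hp
    obtain ⟨q, hq, rfl⟩ := hq
  · have hvqx : O.Pos v q x := hq
    exact hqv.asymm (O.rotate (O.rotate hvqx))
  · have hvxp : O.Pos v x p := hp
    exact hvp.asymm (O.rotate hvxp)

end CCSystem

/-! ### Dyadic counting -/

/-- The largest `l` such that `p` and `q` lie in different dyadic blocks of length `2 ^ l`. -/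
def dyadicLevel (p q : ℕ) : ℕ := Nat.findGreatest (fun l => p / 2 ^ l ≠ q / 2 ^ l) q

/-- The multiple of `2 ^ dyadicLevel p q` that separates `p` from `q`. -/
def dyadicMid (p q : ℕ) : ℕ := q / 2 ^ dyadicLevel p q * 2 ^ dyadicLevel p q

section Dyadic

variable {p p' q q' L : ℕ}

theorem div_two_pow_dyadicLevel_ne (h : p < q) :
    p / 2 ^ dyadicLevel p q ≠ q / 2 ^ dyadicLevel p q :=
  Nat.findGreatest_spec (P := fun l => p / 2 ^ l ≠ q / 2 ^ l) (Nat.zero_le q) (by simpa using h.ne)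

theorem dyadicLevel_lt (h : p < q) (hq : q < 2 ^ L) : dyadicLevel p q < L := by
  by_contra! hle
  have hq' : q < 2 ^ dyadicLevel p q := hq.trans_le (Nat.pow_le_pow_right two_pos hle)
  exact div_two_pow_dyadicLevel_ne h
    (by rw [Nat.div_eq_of_lt hq', Nat.div_eq_of_lt (h.trans hq')])

theorem div_two_pow_dyadicLevel (h : p < q) :
    q / 2 ^ dyadicLevel p q = p / 2 ^ dyadicLevel p q + 1 := by
  have hne := div_two_pow_dyadicLevel_ne h
  have heq := Nat.findGreatest_is_greatest (P := fun l => p / 2 ^ l ≠ q / 2 ^ l)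
    (Nat.lt_succ_self (dyadicLevel p q)) (dyadicLevel_lt h q.lt_two_pow_self)
  rw [not_not, pow_succ, ← Nat.div_div_eq_div_mul, ← Nat.div_div_eq_div_mul] at heq
  have hle : p / 2 ^ dyadicLevel p q ≤ q / 2 ^ dyadicLevel p q := Nat.div_le_div_right h.le
  lia

theorem lt_dyadicMid (h : p < q) : p < dyadicMid p q := by
  rw [dyadicMid, div_two_pow_dyadicLevel h, mul_comm]
  exact Nat.lt_mul_div_succ p (by positivity)

theorem dyadicMid_le : dyadicMid p q ≤ q := Nat.div_mul_le_self _ _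

theorem dyadicMid_eq_of_left (h : p < q) (h' : p < q') (hl : dyadicLevel p q = dyadicLevel p q') :
    dyadicMid p q = dyadicMid p q' := by
  rw [dyadicMid, dyadicMid, div_two_pow_dyadicLevel h, div_two_pow_dyadicLevel h', hl]

theorem dyadicMid_eq_of_right (hl : dyadicLevel p q = dyadicLevel p' q) :
    dyadicMid p q = dyadicMid p' q := by
  rw [dyadicMid, dyadicMid, hl]

end Dyadic

section Pivots

variable {α : Type*} [LinearOrder α] {f : α → ℕ} {ρ : α × α → α}

theorem injOn_dyadicLevel_fst {K : Set (α × α)} (hf : StrictMono f) (hlt : ∀ z ∈ K, z.1 < z.2)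
    (hleft : ∀ p q q', (p, q) ∈ K → (p, q') ∈ K → q < q' → q ≤ ρ (p, q'))
    (hmid : ∀ z ∈ K, f (ρ z) < dyadicMid (f z.1) (f z.2)) :
    InjOn (fun z => (dyadicLevel (f z.1) (f z.2), z.1)) K := by
  have not_snd_lt : ∀ p q q', (p, q) ∈ K → (p, q') ∈ K →
      dyadicLevel (f p) (f q) = dyadicLevel (f p) (f q') → ¬q < q' := fun p q q' h h' hl hqq' =>
    (calc f q ≤ f (ρ (p, q')) := hf.monotone (hleft p q q' h h' hqq')
      _ < dyadicMid (f p) (f q') := hmid _ h'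
      _ = dyadicMid (f p) (f q) :=
        dyadicMid_eq_of_left (hf (hlt (p, q') h')) (hf (hlt (p, q) h)) hl.symm
      _ ≤ f q := dyadicMid_le).false
  rintro ⟨p, q⟩ h ⟨p', q'⟩ h' heq
  obtain ⟨hl, rfl⟩ := Prod.ext_iff.1 heq
  exact Prod.ext rfl (le_antisymm (not_lt.1 (not_snd_lt p q' q h' h hl.symm))
    (not_lt.1 (not_snd_lt p q q' h h' hl)))

theorem injOn_dyadicLevel_snd {K : Set (α × α)} (hf : StrictMono f) (hlt : ∀ z ∈ K, z.1 < z.2)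
    (hright : ∀ p p' q, (p, q) ∈ K → (p', q) ∈ K → p < p' → ρ (p, q) ≤ p')
    (hmid : ∀ z ∈ K, dyadicMid (f z.1) (f z.2) ≤ f (ρ z)) :
    InjOn (fun z => (dyadicLevel (f z.1) (f z.2), z.2)) K := by
  have not_fst_lt : ∀ p p' q, (p, q) ∈ K → (p', q) ∈ K →
      dyadicLevel (f p) (f q) = dyadicLevel (f p') (f q) → ¬p < p' := fun p p' q h h' hl hpp' =>
    (calc f p' < dyadicMid (f p') (f q) := lt_dyadicMid (hf (hlt _ h'))
      _ = dyadicMid (f p) (f q) := (dyadicMid_eq_of_right hl).symm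
      _ ≤ f (ρ (p, q)) := hmid _ h
      _ ≤ f p' := hf.monotone (hright p p' q h h' hpp')).false
  rintro ⟨p, q⟩ h ⟨p', q'⟩ h' heq
  obtain ⟨hl, rfl⟩ := Prod.ext_iff.1 heq
  exact Prod.ext (le_antisymm (not_lt.1 (not_fst_lt p' p q h' h hl.symm))
    (not_lt.1 (not_fst_lt p p' q h h' hl))) rfl

/-- A pair is determined by its dyadic level together with whichever of its endpoints lies on the
same side of the dyadic midpoint as its pivot `ρ`. -/
theorem card_le_of_pivots [Fintype α] {L : ℕ} (hL : Fintype.card α ≤ 2 ^ L) {K : Finset (α × α)}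
    (hlt : ∀ z ∈ K, z.1 < z.2)
    (hleft : ∀ p q q', (p, q) ∈ K → (p, q') ∈ K → q < q' → q ≤ ρ (p, q'))
    (hright : ∀ p p' q, (p, q) ∈ K → (p', q) ∈ K → p < p' → ρ (p, q) ≤ p') :
    K.card ≤ 2 * (L * Fintype.card α) := by
  classical
  let e := (Fintype.orderIsoFinOfCardEq α rfl).symm
  let f : α → ℕ := fun a => e a
  have hf : StrictMono f := fun _ _ hab => e.strictMono hab
  have card_le : ∀ (P : α × α → Prop) (g : α × α → α),
      InjOn (fun z => (dyadicLevel (f z.1) (f z.2), g z)) (K.filter P) →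
      (K.filter P).card ≤ L * Fintype.card α := fun P g hinj => by
    rw [← Finset.card_range L, ← Finset.card_univ, ← Finset.card_product]
    refine Finset.card_le_card_of_injOn _ (fun z hz => ?_) hinj
    have hzlt : f z.1 < f z.2 := hf (hlt z (Finset.mem_filter.1 hz).1)
    exact Finset.mem_product.2 ⟨Finset.mem_range.2 (dyadicLevel_lt hzlt
      ((e z.2).is_lt.trans_le hL)), Finset.mem_univ _⟩
  have card_left := card_le (fun z => f (ρ z) < dyadicMid (f z.1) (f z.2)) Prod.fst <|
    injOn_dyadicLevel_fst (ρ := ρ) hf (by grind) (by grind) (by grind)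
  have card_right := card_le (fun z => ¬f (ρ z) < dyadicMid (f z.1) (f z.2)) Prod.snd <|
    injOn_dyadicLevel_snd (ρ := ρ) hf (by grind) (by grind) (by grind)
  rw [← Finset.card_filter_add_card_filter_not fun z => f (ρ z) < dyadicMid (f z.1) (f z.2)]
  lia

open Classical in
theorem card_le_of_pivot_rel [Fintype α] {L : ℕ} (hL : Fintype.card α ≤ 2 ^ L)
    {W : α → α → α → Prop}
    (hleft : ∀ p q q' r r', p < q → q < q' → W p q r → W p q' r' → q ≤ r')
    (hright : ∀ p p' q r r', p < p' → p' < q → W p q r → W p' q r' → r ≤ p') :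
    (Finset.univ.filter fun z : α × α => z.1 < z.2 ∧ ∃ r, W z.1 z.2 r).card ≤
      2 * (L * Fintype.card α) := by
  have exists_pivot : ∀ z : α × α, ∃ ρ, (∃ r, W z.1 z.2 r) → W z.1 z.2 ρ := fun z => by
    by_cases h : ∃ r, W z.1 z.2 r
    · exact h.imp fun _ hr _ => hr
    · exact ⟨z.1, fun h' => (h h').elim⟩
  choose ρ hρ using exists_pivot
  refine card_le_of_pivots (ρ := ρ) hL (fun z hz => (Finset.mem_filter.1 hz).2.1) ?_ ?_
  · intro p q q' h h' hlt
    obtain ⟨-, hpq, hex⟩ := Finset.mem_filter.1 h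
    obtain ⟨-, -, hex'⟩ := Finset.mem_filter.1 h'
    exact hleft p q q' _ _ hpq hlt (hρ _ hex) (hρ _ hex')
  · intro p p' q h h' hlt
    obtain ⟨-, -, hex⟩ := Finset.mem_filter.1 h
    obtain ⟨-, hpq', hex'⟩ := Finset.mem_filter.1 h'
    exact hright p p' q _ _ hlt hpq' (hρ _ hex) (hρ _ hex')

end Pivots

/-! ### Counting empty triangles -/

section LinearOrder

variable {α : Type*} [LinearOrder α]

open Classical in
theorem card_filter_covBy_le [Fintype α] :
    (Finset.univ.filter fun z : α × α => z.1 ⋖ z.2).card ≤ Fintype.card α := by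
  rw [← Finset.card_univ]
  refine Finset.card_le_card_of_injOn Prod.fst (by simp) fun z hz w hw h => ?_
  have hz' : z.1 ⋖ z.2 := (Finset.mem_filter.1 hz).2
  have hw' : w.1 ⋖ w.2 := (Finset.mem_filter.1 hw).2
  have h' : z.1 = w.1 := h
  exact Prod.ext h' (hz'.unique_right (h' ▸ hw'))

theorem eq_of_insert_eq_of_lt {a b c a' b' c' : α} (hab : a < b) (hbc : b < c) (hab' : a' < b')
    (hbc' : b' < c') (h : ({a, b, c} : Set α) = {a', b', c'}) : a = a' ∧ b = b' ∧ c = c' := by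
  have ha : a ∈ ({a', b', c'} : Set α) := h ▸ by simp
  have hb : b ∈ ({a', b', c'} : Set α) := h ▸ by simp
  have hc : c ∈ ({a', b', c'} : Set α) := h ▸ by simp
  simp only [mem_insert_iff, mem_singleton_iff] at ha hb hc
  clear h
  grind

end LinearOrder

namespace CCSystem

section LinearOrder

variable {α : Type*} [LinearOrder α] [Fintype α] {O : CCSystem α} {L : ℕ}

open Classical in
theorem card_isApex_le (hL : Fintype.card α ≤ 2 ^ L) :
    (Finset.univ.filter fun z : α × α => z.1 < z.2 ∧ ∃ r, O.IsApex z.1 z.2 r).card ≤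
      2 * (L * Fintype.card α) := by
  refine card_le_of_pivot_rel hL ?_ ?_
  · intro p q q' r r' hpq hqq' h h'
    by_contra! hlt
    exact h.unique_left h' (mem_uIoo_of_lt hpq hqq') (by grind [uIoo, h'.mem])
  · intro p p' q r r' hpp' hpq' h h'
    by_contra! hlt
    exact h'.unique_right h (mem_uIoo_of_lt hpp' hpq') (by grind [uIoo, h.mem])

open Classical in
theorem card_isApex_swap_le (hL : Fintype.card α ≤ 2 ^ L) :
    (Finset.univ.filter fun z : α × α => z.1 < z.2 ∧ ∃ r, O.IsApex z.2 z.1 r).card ≤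
      2 * (L * Fintype.card α) := by
  refine card_le_of_pivot_rel (W := fun p q r => O.IsApex q p r) hL ?_ ?_
  · intro p q q' r r' hpq hqq' h h'
    by_contra! hlt
    exact h.unique_right h' (mem_uIoo_of_gt hpq hqq') (by grind [uIoo, h'.mem])
  · intro p p' q r r' hpp' hpq' h h'
    by_contra! hlt
    exact h'.unique_left h (mem_uIoo_of_gt hpp' hpq') (by grind [uIoo, h.mem])

theorem sum_ncard_emptyMiddles_le :
    ∑ z : α × α with z.1 < z.2, (O.emptyMiddles z.1 z.2).ncard ≤ O.emptyTriples.ncard := by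
  classical
  simp_rw [ncard_eq_toFinset_card']
  rw [← Finset.card_sigma]
  refine Finset.card_le_card_of_injOn (fun w => {w.1.1, w.2, w.1.2}) ?_ ?_
  · rintro ⟨⟨p, q⟩, r⟩ hw
    obtain ⟨hpq, hr, hempty⟩ : p < q ∧ r ∈ O.emptyMiddles p q := by simpa using hw
    rw [uIoo_of_lt hpq] at hr
    simpa using ⟨p, r, q, ⟨hr.1.ne, hr.2.ne, hpq.ne'⟩, by simp, hempty⟩
  · rintro ⟨⟨p, q⟩, r⟩ hw ⟨⟨p', q'⟩, r'⟩ hw' heq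
    obtain ⟨hpq, hr, -⟩ : p < q ∧ r ∈ O.emptyMiddles p q := by simpa using hw
    obtain ⟨hpq', hr', -⟩ : p' < q' ∧ r' ∈ O.emptyMiddles p' q' := by
      simpa using hw'
    rw [uIoo_of_lt hpq] at hr
    rw [uIoo_of_lt hpq'] at hr'
    obtain ⟨rfl, rfl, rfl⟩ := eq_of_insert_eq_of_lt hr.1 hr.2 hr'.1 hr'.2
      (by simpa using congrArg (fun s : Finset α => (s : Set α)) heq)
    rfl

open Classical in
theorem IsSorted.two_le_ncard_emptyMiddles_add (hO : O.IsSorted) {p q : α} (hpq : p < q) :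
    2 ≤ (O.emptyMiddles p q).ncard + 2 * (if p ⋖ q then 1 else 0) +
      (if ∃ r, O.IsApex p q r then 1 else 0) + (if ∃ r, O.IsApex q p r then 1 else 0) := by
  by_cases hcov : p ⋖ q
  · rw [if_pos hcov]
    lia
  have hne : (uIoo p q).Nonempty := uIoo_of_lt hpq ▸ (not_covBy_iff_nonempty_Ioo hpq).1 hcov
  have hpos := (ncard_pos).2 (hO.emptyMiddles_nonempty hne)
  rcases hO.emptyMiddles_nontrivial_or_exists_isApex hne with h | h | h
  · have := one_lt_ncard_iff_nontrivial.2 h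
    lia
  · rw [if_pos h]
    lia
  · rw [if_pos h]
    lia

theorem IsSorted.card_sq_le (hO : O.IsSorted) (hL : Fintype.card α ≤ 2 ^ L) :
    Fintype.card α ^ 2 ≤ O.emptyTriples.ncard + 3 * Fintype.card α + 4 * (L * Fintype.card α) := by
  classical
  let pairs : Finset (α × α) := {z | z.1 < z.2}
  have card_pairs : Fintype.card α ^ 2 ≤ 2 * pairs.card + Fintype.card α := by
    have h : pairs.card = (Fintype.card α).choose 2 := by
      simpa [pairs] using Finset.card_product_filter_lt (s := (Finset.univ : Finset α))
    rw [h, Nat.choose_two_right, Nat.mul_div_cancel' (Nat.even_mul_pred_self _).two_dvd, sq,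
      Nat.mul_sub_one]
    lia
  have two_mul_card_pairs_le := Finset.card_nsmul_le_sum pairs _ 2 fun z hz =>
    hO.two_le_ncard_emptyMiddles_add (Finset.mem_filter.1 hz).2
  simp only [Finset.sum_add_distrib, ← Finset.mul_sum, ← Finset.card_filter, smul_eq_mul, pairs,
    Finset.filter_filter] at two_mul_card_pairs_le
  have hcov : (Finset.univ.filter fun z : α × α => z.1 < z.2 ∧ z.1 ⋖ z.2).card ≤ Fintype.card α :=
    (Finset.card_le_card (Finset.monotone_filter_right _ fun _ _ h => h.2)).trans
      card_filter_covBy_le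
  have hapex := card_isApex_le (O := O) hL
  have hapex' := card_isApex_swap_le (O := O) hL
  have hsum := sum_ncard_emptyMiddles_le (O := O)
  lia

end LinearOrder

variable {α : Type*} [Fintype α] [Nontrivial α]

theorem card_sq_le (O : CCSystem α) {L : ℕ} (hL : Fintype.card α ≤ 2 ^ L) :
    Fintype.card α ^ 2 ≤ O.emptyTriples.ncard + 5 * Fintype.card α + 4 * (L * Fintype.card α) := by
  classical
  obtain ⟨v, hv⟩ := O.exists_isOutside_compl_singleton
  let := hv.linearOrder
  have hcard : Fintype.card ({v}ᶜ : Set α) + 1 = Fintype.card α := by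
    have := Fintype.card_pos (α := α)
    rw [Fintype.card_compl_set, card_singleton]
    lia
  have hsorted := hv.isSorted_restrict.card_sq_le (L := L) (by lia)
  have hrestrict := hv.ncard_emptyTriples_restrict_le
  rw [← hcard]
  nlinarith

end CCSystem

theorem nine_add_four_mul_log_two_le {n : ℕ} (hn : 2 ≤ n) :
    (9 + 4 * Nat.log 2 n : ℝ) ≤ 26 * Real.log n := by
  have log_two_le : Real.log 2 ≤ Real.log n := Real.log_le_log two_pos (by exact_mod_cast hn)
  have natLog_mul_log_two_le : Nat.log 2 n * Real.log 2 ≤ Real.log n := by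
    rw [← Real.log_pow]
    exact Real.log_le_log (by positivity) (by exact_mod_cast Nat.pow_log_le_self 2 (by lia))
  have := Real.log_two_gt_d9
  have : (0 : ℝ) ≤ Nat.log 2 n := Nat.cast_nonneg _
  nlinarith

/-- A face-convex drawing of `K_n` has at least `n² − c·n·log n` empty triangles. -/
theorem emptyTriangles_of_faceConvex :
    ∃ c : ℝ, 0 < c ∧ ∀ n : ℕ, 2 ≤ n →
      ∀ (D : GoodDrawing n SpherePt) (F : Set SpherePt), D.FaceConvex F →
        (n : ℝ) ^ 2 - c * n * Real.log n ≤ (D.emptyTriangles.ncard : ℝ) := by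
  refine ⟨26, by norm_num, fun n hn D F hF => ?_⟩
  obtain ⟨O, hO⟩ := hF.exists_ccSystem
  have : Nontrivial (Fin n) := Fin.nontrivial_iff_two_le.2 hn
  have hcount := O.card_sq_le (L := Nat.log 2 n + 1)
    (by simpa using (Nat.lt_pow_succ_log_self one_lt_two n).le)
  have hle : n ^ 2 ≤ D.emptyTriangles.ncard + n * (9 + 4 * Nat.log 2 n) := by
    rw [Fintype.card_fin] at hcount
    linarith
  calc (n : ℝ) ^ 2 - 26 * n * Real.log n
      ≤ D.emptyTriangles.ncard + n * (9 + 4 * Nat.log 2 n) - n * (26 * Real.log n) := by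
        rw [mul_comm 26, mul_assoc]
        gcongr
        exact_mod_cast hle
    _ ≤ D.emptyTriangles.ncard := by
        have := mul_le_mul_of_nonneg_left (nine_add_four_mul_log_two_le hn) n.cast_nonneg
        linarith

end
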